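/- arXiv:1204.5192 — 3 statements merged into one kernel-verified Lean document; each statement's English description precedes it below -/
import Mathlib

section
/- Let ℱ be a finite set of graphs containing at least one forest. Then there exists a constant c depending only on ℱ such that for every graph G, the minimum size of an ℱ-transversal of G is at most c times the maximum size of an ℱ-packing in G. -/
open SimpleGraph Set

/-- `H` is a minor of `G`: there is a model of `H` in `G` given by pairwise disjoint
branch sets, each inducing a connected subgraph, with edges of `H` realized by edges of `G`. -/
def HasMinor {V W : Type*} (G : SimpleGraph V) (H : SimpleGraph W) : Prop :=
  ∃ f : W → Set V,
    (∀ w, ((G.induce (f w)).Connected)) ∧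
    (Pairwise fun w w' => Disjoint (f w) (f w')) ∧
    ∀ ⦃w w'⦄, H.Adj w w' → ∃ a ∈ f w, ∃ b ∈ f w', G.Adj a b

/-- A path decomposition of the part of `G` inside the vertex set `A`, with bags `B 0, …, B (p-1)`. -/
def IsPathDecompOn {V : Type*} (G : SimpleGraph V) (A : Set V) (p : ℕ) (B : Fin p → Set V) : Prop :=
  (∀ i, B i ⊆ A) ∧
  (∀ v ∈ A, ∃ i, v ∈ B i) ∧
  (∀ ⦃u v⦄, G.Adj u v → u ∈ A → v ∈ A → ∃ i, u ∈ B i ∧ v ∈ B i) ∧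
  (∀ v (i j l : Fin p), i ≤ j → j ≤ l → v ∈ B i → v ∈ B l → v ∈ B j)

/-- The pathwidth of `G`: the least `t` such that `G` has a path decomposition of width `t`. -/
noncomputable def pathwidth {V : Type*} (G : SimpleGraph V) : ℕ :=
  sInf {t | ∃ p, ∃ B : Fin p → Set V, IsPathDecompOn G Set.univ p B ∧ ∀ i, (B i).ncard ≤ t + 1}

/-- A packing of `k` vertex-disjoint subgraphs of `G`, each containing `H` as a minor. -/
def IsHPacking {V W : Type*} (G : SimpleGraph V) (H : SimpleGraph W) (k : ℕ)
    (S : Fin k → Set V) : Prop :=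
  (Pairwise fun a b => Disjoint (S a) (S b)) ∧ ∀ a, HasMinor (G.induce (S a)) H

/-- `ν_H(G)`: the maximum size of an `H`-packing in `G`. -/
noncomputable def nuT {V W : Type*} (G : SimpleGraph V) (H : SimpleGraph W) : ℕ :=
  sSup {k | ∃ S : Fin k → Set V, IsHPacking G H k S}

/-- `τ_H(G)`: the minimum size of a vertex set `X` such that `G - X` has no `H`-minor. -/
noncomputable def tauT {V W : Type*} (G : SimpleGraph V) (H : SimpleGraph W) : ℕ :=
  sInf {n | ∃ X : Set V, X.ncard = n ∧ ¬ HasMinor (G.induce Xᶜ) H}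

/-- A packing of `k` vertex-disjoint subgraphs of `G`, each containing some member of the
family `F` as a minor. -/
def IsFPacking {V ι : Type*} {W : ι → Type*} (G : SimpleGraph V) (F : ∀ i, SimpleGraph (W i))
    (k : ℕ) (S : Fin k → Set V) : Prop :=
  (Pairwise fun a b => Disjoint (S a) (S b)) ∧ ∀ a, ∃ i, HasMinor (G.induce (S a)) (F i)

/-- `ν_F(G)`: the maximum size of an `F`-packing in `G`. -/
noncomputable def nuF {V ι : Type*} {W : ι → Type*} (G : SimpleGraph V)
    (F : ∀ i, SimpleGraph (W i)) : ℕ :=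
  sSup {k | ∃ S : Fin k → Set V, IsFPacking G F k S}

/-- `τ_F(G)`: the minimum size of a vertex set `X` such that `G - X` has no minor in `F`. -/
noncomputable def tauF {V ι : Type*} {W : ι → Type*} (G : SimpleGraph V)
    (F : ∀ i, SimpleGraph (W i)) : ℕ :=
  sInf {n | ∃ X : Set V, X.ncard = n ∧ ∀ i, ¬ HasMinor (G.induce Xᶜ) (F i)}

/-!
Let `F i₀` be a forest on `w` vertices. If `G` has path-width more than `w`, then `F i₀` is a minor
of an initial segment `A` of a linear layout of `G` with boundaries of size at most `w`: take such
an `A` with boundary of size at most `m`, maximal under inclusion, together with a model of an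
`m`-vertex subforest all of whose branch sets meet the boundary of `A`; put a new leaf on a
neighbour of `A` outside it, and extend the model to a larger maximal segment by Menger's theorem.
Deleting the at most `w` boundary vertices of `A` separates the copy from the rest, so after at most
`w * k` deletions either `k` disjoint copies have been found or the remaining graph has path-width
at most `w`.

In a graph of path-width at most `w`, connected subgraphs have the linear Erdős–Pósa property, by
sweeping along a layout. Disconnected minors are treated componentwise: if every component of `F i`
has sufficiently many disjoint models, another sweep selects `k` models of each component that are
pairwise disjoint also across components, which form `k` disjoint models of `F i`; if a component
does not have that many models, they can all be hit by few vertices.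
-/

open scoped Function

namespace ErdosPosa

variable {V W κ : Type*} {G : SimpleGraph V} {H : SimpleGraph W}

section Connectivity

theorem induce_connected_iff {S : Set V} :
    (G.induce S).Connected ↔ S.Nonempty ∧
      ∀ T ⊆ S, T.Nonempty → (∀ a ∈ T, ∀ b ∈ S, G.Adj a b → b ∈ T) → T = S := by
  constructor
  · intro h
    refine ⟨nonempty_coe_sort.1 h.nonempty, fun T hTS ⟨a, ha⟩ hT => hTS.antisymm fun b hb => ?_⟩
    obtain ⟨p⟩ := h.preconnected ⟨a, hTS ha⟩ ⟨b, hb⟩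
    by_contra hbT
    obtain ⟨d, -, hfst, hsnd⟩ := p.exists_boundary_dart (Subtype.val ⁻¹' T) ha hbT
    exact hsnd (hT _ hfst _ d.snd.2 d.adj)
  · rintro ⟨hS, h⟩
    have : Nonempty S := hS.to_subtype
    refine ⟨fun a b => ?_⟩
    have hreach : Subtype.val '' {b | (G.induce S).Reachable a b} = S := by
      refine h _ (Subtype.coe_image_subset S _) ⟨a, a, .refl a, rfl⟩ ?_
      rintro _ ⟨x, hx, rfl⟩ y hy hxy
      have hxy' : (G.induce S).Adj x ⟨y, hy⟩ := hxy
      exact ⟨_, hx.trans hxy'.reachable, rfl⟩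
    obtain ⟨b', hb', hbb'⟩ := hreach.ge b.2
    exact Subtype.ext hbb' ▸ hb'

theorem induce_induce_connected_iff {S : Set V} {T : Set S} :
    ((G.induce S).induce T).Connected ↔ (G.induce (Subtype.val '' T)).Connected :=
  Iso.connected_iff ⟨Equiv.Set.image _ T Subtype.val_injective, Iff.rfl⟩

theorem induce_singleton_connected (G : SimpleGraph V) (v : V) : (G.induce {v}).Connected :=
  ⟨Preconnected.of_subsingleton⟩

end Connectivity

section MinorModels

/-- The sets `f w`, for `w ∈ D`, are the branch sets of a minor model of `H.induce D` in `G`. -/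
structure IsMinorModelOn (G : SimpleGraph V) (H : SimpleGraph W) (D : Set W) (f : W → Set V) :
    Prop where
  connected : ∀ w ∈ D, (G.induce (f w)).Connected
  disjoint : D.PairwiseDisjoint f
  adj : ∀ w ∈ D, ∀ w' ∈ D, H.Adj w w' → ∃ a ∈ f w, ∃ b ∈ f w', G.Adj a b

/-- The subgraph of `G` induced by `S` contains a minor model of `H.induce D`. -/
def ContainsModel (G : SimpleGraph V) (H : SimpleGraph W) (D : Set W) (S : Set V) : Prop :=
  ∃ f, IsMinorModelOn G H D f ∧ ∀ w ∈ D, f w ⊆ S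

theorem IsMinorModelOn.congr {D : Set W} {f f' : W → Set V} (h : IsMinorModelOn G H D f)
    (hf : EqOn f f' D) : IsMinorModelOn G H D f' where
  connected w hw := hf hw ▸ h.connected w hw
  disjoint _ hw _ hw' hne := by
    simpa only [Function.onFun, ← hf hw, ← hf hw'] using h.disjoint hw hw' hne
  adj w hw w' hw' := by simpa only [← hf hw, ← hf hw'] using h.adj w hw w' hw'

theorem hasMinor_induce_iff {S : Set V} :
    HasMinor (G.induce S) H ↔ ContainsModel G H univ S := by
  constructor
  · rintro ⟨f, hconn, hdisj, hadj⟩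
    refine ⟨fun w => Subtype.val '' f w, ⟨fun w _ => induce_induce_connected_iff.1 (hconn w),
      fun w _ w' _ hne => disjoint_image_of_injective Subtype.val_injective (hdisj hne),
      fun w _ w' _ hww' => ?_⟩, fun w _ => Subtype.coe_image_subset S _⟩
    obtain ⟨a, ha, b, hb, hab⟩ := hadj hww'
    exact ⟨a, mem_image_of_mem _ ha, b, mem_image_of_mem _ hb, hab⟩
  · rintro ⟨f, hf, hfS⟩
    refine ⟨fun w => Subtype.val ⁻¹' f w, fun w => ?_, fun w w' hne => ?_, fun w w' hww' => ?_⟩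
    · rw [induce_induce_connected_iff, Subtype.image_preimage_coe,
        inter_eq_right.2 (hfS w trivial)]
      exact hf.connected w trivial
    · exact (hf.disjoint trivial trivial hne).preimage _
    · obtain ⟨a, ha, b, hb, hab⟩ := hf.adj w trivial w' trivial hww'
      exact ⟨⟨a, hfS w trivial ha⟩, ha, ⟨b, hfS w' trivial hb⟩, hb, hab⟩

theorem IsMinorModelOn.induce_biUnion_connected {D : Set W} {f : W → Set V}
    (hf : IsMinorModelOn G H D f) (hD : (H.induce D).Connected) :
    (G.induce (⋃ w ∈ D, f w)).Connected := by
  obtain ⟨⟨w₀, hw₀⟩, hDclosed⟩ := induce_connected_iff.1 hD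
  have hne (w) (hw : w ∈ D) : (f w).Nonempty := nonempty_coe_sort.1 (hf.connected w hw).nonempty
  refine induce_connected_iff.2 ⟨(hne w₀ hw₀).mono (subset_biUnion_of_mem hw₀), ?_⟩
  rintro T hT ⟨x, hx⟩ hclosed
  have habsorb (w) (hw : w ∈ D) (hwT : (f w ∩ T).Nonempty) : f w ⊆ T := by
    refine inter_eq_left.1 <| (induce_connected_iff.1 (hf.connected w hw)).2 _
      inter_subset_left hwT fun a ha b hb hab => ⟨hb, hclosed a ha.2 b ?_ hab⟩
    exact mem_biUnion hw hb
  obtain ⟨w, hw, hxw⟩ := mem_iUnion₂.1 (hT hx)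
  have hall : {w ∈ D | f w ⊆ T} = D := by
    refine hDclosed _ (sep_subset _ _) ⟨w, hw, habsorb w hw ⟨x, hxw, hx⟩⟩ ?_
    rintro u ⟨hu, huT⟩ v hv huv
    obtain ⟨a, ha, b, hb, hab⟩ := hf.adj u hu v hv huv
    exact ⟨hv, habsorb v hv ⟨b, hb, hclosed a (huT ha) b (mem_biUnion hv hb) hab⟩⟩
  exact hT.antisymm (iUnion₂_subset fun v hv => (hall.ge hv).2)

end MinorModels

section Packs

/-- Pairwise disjoint subsets of `S`, one for each index `c`, having the property `Q c`. A
`k`-packing of sets with the property `Q` is the case of the constant family on `Fin k`. -/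
def Packs (Q : κ → Set V → Prop) (S : Set V) : Prop :=
  ∃ g : κ → Set V, Pairwise (Disjoint on g) ∧ ∀ c, g c ⊆ S ∧ Q c (g c)

theorem Packs.mono {Q : κ → Set V → Prop} {S S' : Set V} (hS : S ⊆ S') :
    Packs Q S → Packs Q S' :=
  fun ⟨g, hg, h⟩ => ⟨g, hg, fun c => ⟨(h c).1.trans hS, (h c).2⟩⟩

theorem packs_of_isEmpty [IsEmpty κ] (Q : κ → Set V → Prop) (S : Set V) : Packs Q S :=
  ⟨fun _ => ∅, fun c => isEmptyElim c, isEmptyElim⟩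

theorem Packs.cons {Q : Set V → Prop} {A S : Set V} {n : ℕ} (hAS : A ⊆ S) (hA : Q A)
    (h : Packs (fun _ : Fin n => Q) (S \ A)) : Packs (fun _ : Fin (n + 1) => Q) S := by
  obtain ⟨g, hg, hgS⟩ := h
  refine ⟨Fin.cons A g, pairwise_fin_succ_iff_of_isSymm.2 ⟨fun i => ?_, ?_⟩, Fin.cases ?_ ?_⟩
  · simpa [Function.onFun] using (disjoint_sdiff_left.mono_left (hgS i).1).symm
  · simpa [Function.onFun, Pairwise] using hg
  · exact ⟨hAS, hA⟩
  · exact fun i => ⟨(hgS i).1.trans sdiff_subset, (hgS i).2⟩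

theorem Packs.curry {κ' : Type*} {Q : κ × κ' → Set V → Prop} {S : Set V} (h : Packs Q S) :
    Packs (fun b => Packs fun a => Q (a, b)) S := by
  obtain ⟨g, hg, hgS⟩ := h
  refine ⟨fun b => ⋃ a, g (a, b), fun b b' hne => ?_, fun b =>
    ⟨iUnion_subset fun a => (hgS (a, b)).1, fun a => g (a, b), ?_, fun a =>
      ⟨subset_iUnion (fun a => g (a, b)) a, (hgS (a, b)).2⟩⟩⟩
  · simp only [Function.onFun, disjoint_iUnion_left, disjoint_iUnion_right]
    exact fun a a' => hg fun h => hne (congrArg Prod.snd h)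
  · exact fun a a' hne => hg fun h => hne (congrArg Prod.fst h)

theorem ContainsModel.packs_components {S : Set V} (h : ContainsModel G H univ S) :
    Packs (fun c : H.ConnectedComponent => ContainsModel G H c.supp) S := by
  obtain ⟨f, hf, hfS⟩ := h
  refine ⟨fun c => ⋃ w ∈ c.supp, f w, fun c c' hne => ?_, fun c =>
    ⟨iUnion₂_subset fun w _ => hfS w trivial, f, ⟨fun w _ => hf.connected w trivial,
      hf.disjoint.subset (subset_univ _), fun w _ w' _ => hf.adj w trivial w' trivial⟩,
      fun w hw => subset_biUnion_of_mem (u := f) hw⟩⟩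
  simp only [Function.onFun, disjoint_iUnion_left, disjoint_iUnion_right]
  rintro w' rfl w rfl
  exact hf.disjoint trivial trivial fun hww' => hne (hww' ▸ rfl)

theorem Packs.containsModel_univ {S : Set V}
    (h : Packs (fun c : H.ConnectedComponent => ContainsModel G H c.supp) S) :
    ContainsModel G H univ S := by
  obtain ⟨g, hg, h⟩ := h
  choose hgS f hf hfg using h
  refine ⟨fun w => f (H.connectedComponentMk w) w, ⟨fun w _ => (hf _).connected w rfl,
    fun w _ w' _ hne => ?_, fun w _ w' _ hadj => ?_⟩, fun w _ => (hfg _ w rfl).trans (hgS _)⟩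
  · by_cases hc : H.connectedComponentMk w' = H.connectedComponentMk w
    · simpa only [Function.onFun, hc] using (hf _).disjoint rfl hc hne
    · exact (hg (Ne.symm hc)).mono (hfg _ w rfl) (hfg _ w' rfl)
  · have hc : H.connectedComponentMk w' = H.connectedComponentMk w :=
      ConnectedComponent.sound hadj.symm.reachable
    simpa only [hc] using (hf _).adj w rfl w' hc hadj

theorem hasMinor_induce_iff_packs {S : Set V} :
    HasMinor (G.induce S) H ↔
      Packs (fun c : H.ConnectedComponent => ContainsModel G H c.supp) S :=
  hasMinor_induce_iff.trans ⟨ContainsModel.packs_components, Packs.containsModel_univ⟩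

theorem hasMinor_induce_mono {S S' : Set V} (hS : S ⊆ S') (h : HasMinor (G.induce S) H) :
    HasMinor (G.induce S') H :=
  hasMinor_induce_iff_packs.2 ((hasMinor_induce_iff_packs.1 h).mono hS)

/-- A monotone property of vertex sets that is always witnessed by a connected subset, such as
containing a model of a connected graph. -/
structure IsConnectedProperty (G : SimpleGraph V) (Q : Set V → Prop) : Prop where
  mono : Monotone Q
  exists_connected : ∀ S, Q S → ∃ S' ⊆ S, (G.induce S').Connected ∧ Q S'

theorem isConnectedProperty_containsModel {D : Set W} (hD : (H.induce D).Connected) :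
    IsConnectedProperty G (ContainsModel G H D) where
  mono _ _ hS := fun ⟨f, hf, hfS⟩ => ⟨f, hf, fun w hw => (hfS w hw).trans hS⟩
  exists_connected _ := fun ⟨f, hf, hfS⟩ => ⟨_, iUnion₂_subset hfS,
    hf.induce_biUnion_connected hD, f, hf, fun _ hw => subset_biUnion_of_mem (u := f) hw⟩

end Packs

section Layouts

/-- The inner vertex boundary of `A` in the subgraph induced by `U`. -/
def boundary (G : SimpleGraph V) (U A : Set V) : Set V :=
  {v | v ∈ A ∧ ∃ u ∈ U, u ∉ A ∧ G.Adj v u}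

variable {U A B C : Set V} {w : ℕ}

@[simp] theorem boundary_empty : boundary G U ∅ = ∅ := by simp [boundary]

theorem boundary_insert_subset {y : V} : boundary G U (insert y A) ⊆ insert y (boundary G U A) := by
  rintro v ⟨rfl | hv, u, hu, huA, hvu⟩
  · exact mem_insert v _
  · exact .inr ⟨hv, u, hu, fun h => huA (.inr h), hvu⟩

theorem ncard_boundary_inter_add_ncard_boundary_union_le [Finite V] :
    (boundary G U (A ∩ B)).ncard + (boundary G U (A ∪ B)).ncard ≤
      (boundary G U A).ncard + (boundary G U B).ncard := by
  rw [← ncard_union_add_ncard_inter (boundary G U (A ∩ B)),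
    ← ncard_union_add_ncard_inter (boundary G U A)]
  refine Nat.add_le_add (ncard_le_ncard ?_) (ncard_le_ncard ?_)
  · rintro v (⟨⟨hA, hB⟩, u, hu, huAB, hvu⟩ | ⟨hA | hB, u, hu, huAB, hvu⟩)
    · by_cases huA : u ∈ A
      · exact .inr ⟨hB, u, hu, fun huB => huAB ⟨huA, huB⟩, hvu⟩
      · exact .inl ⟨hA, u, hu, huA, hvu⟩
    · exact .inl ⟨hA, u, hu, fun huA => huAB (.inl huA), hvu⟩
    · exact .inr ⟨hB, u, hu, fun huB => huAB (.inr huB), hvu⟩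
  · rintro v ⟨⟨⟨hA, hB⟩, -⟩, -, u, hu, huAB, hvu⟩
    exact ⟨⟨hA, u, hu, fun huA => huAB (.inl huA), hvu⟩,
      ⟨hB, u, hu, fun huB => huAB (.inr huB), hvu⟩⟩

theorem subset_or_subset_sdiff_of_disjoint_boundary {S : Set V} (hS : (G.induce S).Connected)
    (hSU : S ⊆ U) (hSA : Disjoint S (boundary G U A)) : S ⊆ A ∨ S ⊆ U \ A := by
  by_cases hne : (S ∩ A).Nonempty
  · refine .inl (inter_eq_left.1 <| (induce_connected_iff.1 hS).2 _ inter_subset_left hne ?_)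
    refine fun a ha b hb hab => ⟨hb, by_contra fun hbA => ?_⟩
    exact disjoint_left.1 hSA ha.1 ⟨ha.2, b, hSU hb, hbA, hab⟩
  · exact .inr (subset_sdiff.2 ⟨hSU, not_not.1 (mt not_disjoint_iff_nonempty_inter.1 hne)⟩)

/-- `A` has a linear layout whose initial segments all have boundary of size at most `w` in
`G.induce U`. For `A = U` this says that `G.induce U` has path-width at most `w`. -/
inductive HasLayout (G : SimpleGraph V) (U : Set V) (w : ℕ) : Set V → Prop
  | empty : HasLayout G U w ∅
  | step {A : Set V} {y : V} : HasLayout G U w A → y ∈ U →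
      (boundary G U (insert y A)).ncard ≤ w → HasLayout G U w (insert y A)

namespace HasLayout

theorem subset (h : HasLayout G U w A) : A ⊆ U := by
  induction h with
  | empty => exact empty_subset U
  | step _ hy _ ih => exact insert_subset hy ih

theorem ncard_boundary_le (h : HasLayout G U w A) : (boundary G U A).ncard ≤ w := by
  cases h with
  | empty => simp
  | step _ _ hw => exact hw

theorem exists_first (h : HasLayout G U w A) {P : Set V → Prop} (h₀ : ¬P ∅) (hA : P A) :
    ∃ B y, HasLayout G U w (insert y B) ∧ ¬P B ∧ P (insert y B) := by
  induction h with
  | empty => exact absurd hA h₀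
  | @step A y hA' hy hw ih =>
    by_cases hP : P A
    · exact ih hP
    · exact ⟨A, y, hA'.step hy hw, hP, hA⟩

theorem restrict [Finite V] (h : HasLayout G U w A) {U' : Set V} (hU' : U' ⊆ U) :
    HasLayout G U' w (A ∩ U') := by
  induction h with
  | empty => simpa only [empty_inter] using HasLayout.empty
  | @step A y _ _ hw ih =>
    by_cases hyU' : y ∈ U'
    · rw [insert_inter_of_mem hyU']
      refine ih.step hyU' ((ncard_le_ncard ?_).trans hw)
      rw [← insert_inter_of_mem hyU']
      rintro v ⟨hv, u, hu, huA, hvu⟩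
      exact ⟨hv.1, u, hU' hu, fun h => huA ⟨h, hu⟩, hvu⟩
    · rwa [insert_inter_of_notMem hyU']

theorem mono [Finite V] (h : HasLayout G U w U) {U' : Set V} (hU' : U' ⊆ U) :
    HasLayout G U' w U' := by
  simpa only [inter_eq_right.2 hU'] using h.restrict hU'

theorem append [Finite V] (hA : HasLayout G U w A) (hbA : boundary G U A = ∅)
    (hB : HasLayout G (U \ A) w B) : HasLayout G U w (A ∪ B) := by
  induction hB with
  | empty => simpa only [union_empty] using hA
  | @step B y _ hy hw ih =>
    rw [union_insert]
    refine ih.step hy.1 ((ncard_le_ncard ?_).trans hw)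
    rw [← union_insert]
    rintro v ⟨hv, u, hu, huAB, hvu⟩
    have huA : u ∉ A := fun h => huAB (.inl h)
    have hvA : v ∉ A := fun h => eq_empty_iff_forall_notMem.1 hbA v ⟨h, u, hu, huA, hvu⟩
    exact ⟨hv.resolve_left hvA, u, ⟨hu, huA⟩, fun h => huAB (.inr h), hvu⟩

end HasLayout

/-- No set between `A` and `B` has smaller boundary than `A`. -/
def BoundaryMinimal (G : SimpleGraph V) (U A B : Set V) : Prop :=
  ∀ C, A ⊆ C → C ⊆ B → (boundary G U A).ncard ≤ (boundary G U C).ncard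

theorem HasLayout.of_boundaryMinimal [Finite V] (hB : HasLayout G U w B) (hAB : A ⊆ B)
    (hmin : BoundaryMinimal G U A B) : HasLayout G U w A := by
  suffices h : ∀ C, HasLayout G U w C → C ⊆ B → HasLayout G U w (A ∩ C) by
    simpa only [inter_eq_left.2 hAB] using h B hB subset_rfl
  intro C hC
  induction hC with
  | empty => simpa only [inter_empty] using fun _ => HasLayout.empty
  | @step C y _ hy hw ih =>
    intro hCB
    have ihC := ih ((subset_insert y C).trans hCB)
    by_cases hyA : y ∈ A
    · rw [inter_insert_of_mem hyA]
      refine ihC.step hy ?_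
      rw [← inter_insert_of_mem hyA]
      have hsub := ncard_boundary_inter_add_ncard_boundary_union_le
        (G := G) (U := U) (A := A) (B := insert y C)
      have hunion := hmin (A ∪ insert y C) subset_union_left (union_subset hAB hCB)
      omega
    · rwa [inter_insert_of_notMem hyA]

theorem HasLayout.exists_first_cut [Finite V] (hU : HasLayout G U w U) {P : Set V → Prop}
    (h₀ : ¬P ∅) (hPU : P U) :
    ∃ B A Z, A ⊆ U ∧ ¬P B ∧ P A ∧ Z.ncard ≤ w + 1 ∧
      (∀ S ⊆ U, (G.induce S).Connected → Disjoint S Z → S ⊆ B ∨ S ⊆ U \ A) ∧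
      HasLayout G (U \ A) w (U \ A) := by
  obtain ⟨B, y, hA, hB, hPA⟩ := hU.exists_first h₀ hPU
  refine ⟨B, insert y B, insert y (boundary G U (insert y B)), hA.subset, hB, hPA,
    (ncard_insert_le _ _).trans (Nat.add_le_add_right hA.ncard_boundary_le 1), ?_,
    hU.mono sdiff_subset⟩
  rintro S hSU hS hdisj
  obtain ⟨hyS, hSA⟩ := disjoint_insert_right.1 hdisj
  exact (subset_or_subset_sdiff_of_disjoint_boundary hS hSU hSA).imp_left
    (subset_insert_iff_of_notMem hyS).1

end Layouts

section Menger

variable {U A B C : Set V}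

/-- The sets `P x`, for `x` in the boundary of `A`, are disjoint and connected, and `P x` joins `x`
to the boundary of `B` without using another vertex of `A`. Menger's theorem would have
paths here, but only their vertex sets matter. -/
structure IsLinkage (G : SimpleGraph V) (U A B : Set V) (P : V → Set V) : Prop where
  mem : ∀ x ∈ boundary G U A, x ∈ P x
  subset : ∀ x ∈ boundary G U A, P x ⊆ insert x (B \ A)
  connected : ∀ x ∈ boundary G U A, (G.induce (P x)).Connected
  meets : ∀ x ∈ boundary G U A, (P x ∩ boundary G U B).Nonempty
  disjoint : (boundary G U A).PairwiseDisjoint P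

theorem isLinkage_singleton (h : boundary G U A ⊆ boundary G U B) :
    IsLinkage G U A B singleton where
  mem _ _ := rfl
  subset x _ := singleton_subset_iff.2 (mem_insert x _)
  connected x _ := induce_singleton_connected G x
  meets x hx := ⟨x, rfl, h hx⟩
  disjoint _ _ _ _ hne := disjoint_singleton.2 hne

theorem IsLinkage.trans {P Q : V → Set V} (hAC : A ⊆ C) (hCB : C ⊆ B)
    (hP : IsLinkage G U A C P) (hQ : IsLinkage G U C B Q) : ∃ R, IsLinkage G U A B R := by
  choose! e heP heC using hP.meets
  have hPC (x) (hx : x ∈ boundary G U A) : P x ⊆ C :=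
    (hP.subset x hx).trans (insert_subset (hAC hx.1) sdiff_subset)
  have hdisj (x) (hx : x ∈ boundary G U A) (x') (hx' : x' ∈ boundary G U A) (hne : x ≠ x') :
      Disjoint (P x) (Q (e x')) := by
    refine (disjoint_insert_right.2 ⟨fun h => ?_, ?_⟩).mono_right (hQ.subset _ (heC x' hx'))
    · exact disjoint_left.1 (hP.disjoint hx hx' hne) h (heP x' hx')
    · exact disjoint_sdiff_right.mono_left (hPC x hx)
  refine ⟨fun x => P x ∪ Q (e x), fun x hx => .inl (hP.mem x hx), fun x hx => ?_, fun x hx => ?_,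
    fun x hx => ?_, fun x hx x' hx' hne => ?_⟩
  · have hPx : P x ⊆ insert x (B \ A) :=
      (hP.subset x hx).trans (insert_subset_insert (sdiff_subset_sdiff_left hCB))
    refine union_subset hPx ((hQ.subset _ (heC x hx)).trans (insert_subset (hPx (heP x hx)) ?_))
    exact (sdiff_subset_sdiff_right hAC).trans (subset_insert _ _)
  · exact induce_union_connected (hP.connected x hx).preconnected
      (hQ.connected _ (heC x hx)).preconnected ⟨e x, heP x hx, hQ.mem _ (heC x hx)⟩
  · exact (hQ.meets _ (heC x hx)).mono (inter_subset_inter_left _ subset_union_right)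
  · have hee' : e x ≠ e x' := fun h =>
      disjoint_left.1 (hP.disjoint hx hx' hne) (heP x hx) (h ▸ heP x' hx')
    simp only [Function.onFun, disjoint_union_left, disjoint_union_right]
    exact ⟨⟨hP.disjoint hx hx' hne, (hdisj x' hx' x hx hne.symm).symm⟩,
      hdisj x hx x' hx' hne, hQ.disjoint (heC x hx) (heC x' hx') hee'⟩

theorem boundary_insert_subset_of_forall_adj_eq {x y : V}
    (hxy : ∀ u ∈ U, u ∉ A → G.Adj x u → u = y) :
    boundary G U (insert y A) ⊆ insert y (boundary G U A \ {x}) := by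
  intro v hv
  refine (boundary_insert_subset hv).imp_right fun hvA => ⟨hvA, ?_⟩
  rintro rfl
  obtain ⟨-, u, hu, huA, hvu⟩ := hv
  exact huA (.inl (hxy u hu (fun h => huA (.inr h)) hvu))

theorem ncard_boundary_insert_le_of_forall_adj_eq [Finite V] {x y : V} (hx : x ∈ boundary G U A)
    (hxy : ∀ u ∈ U, u ∉ A → G.Adj x u → u = y) :
    (boundary G U (insert y A)).ncard ≤ (boundary G U A).ncard :=
  (ncard_le_ncard (boundary_insert_subset_of_forall_adj_eq hxy)).trans <|
    (ncard_insert_le _ _).trans (ncard_sdiff_singleton_add_one hx).le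

theorem exists_isLinkage_insert [Finite V] {x y : V} (hx : x ∈ boundary G U A) (hyA : y ∉ A)
    (hxy : G.Adj x y) (hunique : ∀ u ∈ U, u ∉ A → G.Adj x u → u = y)
    (hle : (boundary G U A).ncard ≤ (boundary G U (insert y A)).ncard) :
    ∃ P, IsLinkage G U A (insert y A) P := by
  classical
  have hbd : boundary G U (insert y A) = insert y (boundary G U A \ {x}) := by
    refine eq_of_subset_of_ncard_le (boundary_insert_subset_of_forall_adj_eq hunique)
      (le_trans ?_ hle)
    exact (ncard_insert_le _ _).trans (ncard_sdiff_singleton_add_one hx).le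
  have hny (z) (hz : z ∈ boundary G U A) : z ≠ y := fun h => hyA (h ▸ hz.1)
  refine ⟨Function.update singleton x {x, y}, fun z _ => ?_, fun z _ => ?_, fun z _ => ?_,
    fun z hz => ?_, fun z hz z' hz' hne => ?_⟩
  · rcases eq_or_ne z x with rfl | hzx
    · simp
    · simp [hzx]
  · rcases eq_or_ne z x with rfl | hzx
    · simp [hyA]
    · simp [hzx]
  · rcases eq_or_ne z x with rfl | hzx
    · rw [Function.update_self]
      exact induce_pair_connected_of_adj hxy
    · rw [Function.update_of_ne hzx]
      exact induce_singleton_connected G z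
  · rcases eq_or_ne z x with rfl | hzx
    · exact ⟨y, by simp, hbd ▸ mem_insert y _⟩
    · exact ⟨z, by simp [hzx], hbd ▸ .inr ⟨hz, hzx⟩⟩
  · rcases eq_or_ne z x with rfl | hzx
    · simp [Function.onFun, hne.symm, hny z' hz']
    · rcases eq_or_ne z' x with rfl | hzx'
      · simp [Function.onFun, hne, hny z hz]
      · simpa [Function.onFun, hzx, hzx'] using hne

theorem boundary_mono_graph {G' : SimpleGraph V} (hG : G' ≤ G) :
    boundary G' U A ⊆ boundary G U A :=
  fun _ ⟨hvA, u, hu, huA, hvu⟩ => ⟨hvA, u, hu, huA, hG hvu⟩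

theorem IsLinkage.mono_graph {G' : SimpleGraph V} {P : V → Set V} (hG : G' ≤ G)
    (hA : boundary G' U A = boundary G U A) (hP : IsLinkage G' U A B P) :
    IsLinkage G U A B P where
  mem x hx := hP.mem x (hA.ge hx)
  subset x hx := hP.subset x (hA.ge hx)
  connected x hx := (hP.connected x (hA.ge hx)).mono fun _ _ h => hG h
  meets x hx := (hP.meets x (hA.ge hx)).mono (inter_subset_inter_right _ (boundary_mono_graph hG))
  disjoint := hA ▸ hP.disjoint

theorem boundary_subset_insert_boundary_deleteEdges {x y : V} (hx : x ∈ A) :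
    boundary G U A ⊆ insert x (boundary (G.deleteEdges {s(x, y)}) U A) := by
  rintro v ⟨hvA, u, hu, huA, hvu⟩
  refine or_iff_not_imp_left.2 fun hvx => ⟨hvA, u, hu, huA, deleteEdges_adj.2 ⟨hvu, ?_⟩⟩
  rintro h
  obtain ⟨hvx', -⟩ | ⟨-, rfl⟩ := Sym2.eq_iff.1 h
  · exact hvx hvx'
  · exact huA hx

theorem boundary_deleteEdges_eq {x y : V} (hx : x ∈ A)
    (h : x ∈ boundary G U A → x ∈ boundary (G.deleteEdges {s(x, y)}) U A) :
    boundary (G.deleteEdges {s(x, y)}) U A = boundary G U A := by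
  refine (boundary_mono_graph (deleteEdges_le _)).antisymm fun v hv => ?_
  rcases boundary_subset_insert_boundary_deleteEdges (y := y) hx hv with rfl | hv'
  · exact h hv
  · exact hv'

theorem BoundaryMinimal.mono_left (hmin : BoundaryMinimal G U A B) (hAC : A ⊆ C)
    (hle : (boundary G U C).ncard ≤ (boundary G U A).ncard) : BoundaryMinimal G U C B :=
  fun D hCD hDB => hle.trans (hmin D (hAC.trans hCD) hDB)

theorem BoundaryMinimal.deleteEdges [Finite V] {x y : V} (hx : x ∈ A)
    (hmin : BoundaryMinimal G U A B) (hAB : A ⊆ B)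
    (hstrict : ∀ C, A ⊂ C → C ⊂ B → (boundary G U A).ncard < (boundary G U C).ncard)
    (hA : boundary (G.deleteEdges {s(x, y)}) U A = boundary G U A)
    (hB : boundary (G.deleteEdges {s(x, y)}) U B = boundary G U B) :
    BoundaryMinimal (G.deleteEdges {s(x, y)}) U A B := by
  intro C hAC hCB
  rw [hA]
  rcases hAC.eq_or_ssubset with rfl | hAC'
  · rw [hA]
  rcases hCB.eq_or_ssubset with rfl | hCB'
  · exact hB ▸ hmin C hAB subset_rfl
  refine Nat.le_of_lt_succ ((hstrict C hAC' hCB').trans_le ?_)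
  exact (ncard_le_ncard (boundary_subset_insert_boundary_deleteEdges (hAC hx))).trans
    (ncard_insert_le _ _)

-- If some set strictly between `A` and `B` has a boundary as small as that of `A`, compose linkages
-- through it. Otherwise an edge leaving `A` is either the only one at its end `x`, and moving along
-- it reaches `B`, or it can be deleted.
theorem BoundaryMinimal.exists_isLinkage [Finite V] {G : SimpleGraph V} {U A B : Set V}
    (hmin : BoundaryMinimal G U A B) (hAB : A ⊆ B) : ∃ P, IsLinkage G U A B P := by
  by_cases hsub : boundary G U A ⊆ boundary G U B
  · exact ⟨_, isLinkage_singleton hsub⟩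
  obtain ⟨x, hxA, hxB⟩ := not_subset.1 hsub
  obtain ⟨hx, y, hyU, hyA, hxy⟩ := id hxA
  have hyB : y ∈ B := by_contra fun h => hxB ⟨hAB hx, y, hyU, h, hxy⟩
  by_cases htight : ∃ C, A ⊂ C ∧ C ⊂ B ∧ (boundary G U C).ncard ≤ (boundary G U A).ncard
  · obtain ⟨C, hAC, hCB, hle⟩ := htight
    have : (C \ A).ncard < (B \ A).ncard :=
      ncard_lt_ncard (sdiff_lt_sdiff_right hCB hAC.subset)
    have : (B \ C).ncard < (B \ A).ncard := by
      obtain ⟨z, hzC, hzA⟩ := exists_of_ssubset hAC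
      refine ncard_lt_ncard ((ssubset_iff_of_subset (sdiff_subset_sdiff_right hAC.subset)).2 ?_)
      exact ⟨z, ⟨hCB.subset hzC, hzA⟩, fun h => h.2 hzC⟩
    have hminAC : BoundaryMinimal G U A C := fun D hAD hDC => hmin D hAD (hDC.trans hCB.subset)
    obtain ⟨P, hP⟩ := hminAC.exists_isLinkage hAC.subset
    obtain ⟨Q, hQ⟩ := (hmin.mono_left hAC.subset hle).exists_isLinkage hCB.subset
    exact hP.trans hAC.subset hCB.subset hQ
  push Not at htight
  by_cases hunique : ∀ u ∈ U, u ∉ A → G.Adj x u → u = y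
  · have hyAB : insert y A ⊆ B := insert_subset hyB hAB
    have hinsert : insert y A = B := hyAB.eq_of_not_ssubset fun hne =>
      (htight _ (ssubset_insert hyA) hne).not_ge
        (ncard_boundary_insert_le_of_forall_adj_eq hxA hunique)
    exact hinsert ▸ exists_isLinkage_insert hxA hyA hxy hunique (hmin _ (subset_insert y A) hyAB)
  · push Not at hunique
    obtain ⟨y', hy'U, hy'A, hxy', hne⟩ := hunique
    have hA : boundary (G.deleteEdges {s(x, y)}) U A = boundary G U A :=
      boundary_deleteEdges_eq hx fun _ =>
        ⟨hx, y', hy'U, hy'A, deleteEdges_adj.2 ⟨hxy', by simp [hne, hxy.ne]⟩⟩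
    have hB : boundary (G.deleteEdges {s(x, y)}) U B = boundary G U B :=
      boundary_deleteEdges_eq (hAB hx) fun h => absurd h hxB
    have : (G.deleteEdges {s(x, y)}).edgeSet.ncard < G.edgeSet.ncard := by
      rw [edgeSet_deleteEdges]
      exact ncard_sdiff_singleton_lt_of_mem hxy
    obtain ⟨P, hP⟩ := (hmin.deleteEdges hx hAB htight hA hB).exists_isLinkage hAB
    exact ⟨P, hP.mono_graph (deleteEdges_le _) hA⟩
termination_by G.edgeSet.ncard + (B \ A).ncard
decreasing_by all_goals omega

end Menger

section PathWidth

variable {U A B C : Set V} {D : Set W} {w m : ℕ} {f : W → Set V}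

theorem exists_subsingleton_neighborSet [Finite W] [Nonempty W] (hH : H.IsAcyclic) :
    ∃ v, (H.neighborSet v).Subsingleton := by
  obtain ⟨u, v, p, hp, hmax⟩ := Walk.exists_isPath_forall_isPath_length_le_length H
  have hpen (a) (ha : H.Adj v a) : a = p.penultimate := by
    refine hH.eq_penultimate_of_adj_end hp ha (by_contra fun hap => ?_)
    have hlen := hmax _ _ (p.concat ha) (hp.concat hap ha)
    rw [Walk.length_concat] at hlen
    omega
  exact ⟨v, fun a ha b hb => (hpen a ha).trans (hpen b hb).symm⟩

theorem exists_mem_subsingleton_neighborSet_inter [Finite W] (hH : H.IsAcyclic)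
    (hD : D.Nonempty) : ∃ v ∈ D, (H.neighborSet v ∩ D).Subsingleton := by
  have : Nonempty D := hD.to_subtype
  obtain ⟨⟨v, hv⟩, hsub⟩ := exists_subsingleton_neighborSet (hH.induce D)
  refine ⟨v, hv, fun a ha b hb => ?_⟩
  exact congrArg Subtype.val (hsub (show (⟨a, ha.2⟩ : D) ∈ _ from ha.1)
    (show (⟨b, hb.2⟩ : D) ∈ _ from hb.1))

/-- A minor model of `H.induce D` inside `A`, each of whose branch sets meets the boundary of `A`,
so that it can still be extended beyond `A`. -/
structure IsRootedModel (G : SimpleGraph V) (H : SimpleGraph W) (U : Set V) (D : Set W)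
    (A : Set V) (f : W → Set V) : Prop extends IsMinorModelOn G H D f where
  subset : ∀ u ∈ D, f u ⊆ A
  rooted : ∀ u ∈ D, (f u ∩ boundary G U A).Nonempty

theorem isRootedModel_empty : IsRootedModel G H U ∅ A f :=
  ⟨⟨by simp, by simp, by simp⟩, by simp, by simp⟩

theorem IsRootedModel.exists_vertex (hf : IsRootedModel G H U D A f) (hAU : ¬U ⊆ A) {v : W}
    (hv : (H.neighborSet v ∩ D).Subsingleton) :
    ∃ y ∈ U, y ∉ A ∧ ∀ u ∈ D, H.Adj v u → ∃ a ∈ f u, G.Adj a y := by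
  by_cases hne : (H.neighborSet v ∩ D).Nonempty
  · obtain ⟨u, hvu, hu⟩ := hne
    obtain ⟨a, ha, -, y, hyU, hyA, hay⟩ := hf.rooted u hu
    refine ⟨y, hyU, hyA, fun u' hu' hvu' => ?_⟩
    obtain rfl : u' = u := hv ⟨hvu', hu'⟩ ⟨hvu, hu⟩
    exact ⟨a, ha, hay⟩
  · obtain ⟨y, hyU, hyA⟩ := not_subset.1 hAU
    exact ⟨y, hyU, hyA, fun u hu hvu => absurd ⟨u, hvu, hu⟩ hne⟩

theorem IsMinorModelOn.insert_singleton (hf : IsMinorModelOn G H D f) {v : W} {y : V}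
    (hv : f v = {y}) (hvD : v ∉ D) (hy : ∀ u ∈ D, y ∉ f u)
    (hadj : ∀ u ∈ D, H.Adj v u → ∃ a ∈ f u, G.Adj a y) :
    IsMinorModelOn G H (insert v D) f where
  connected := forall_mem_insert.2 ⟨hv ▸ induce_singleton_connected G y, hf.connected⟩
  disjoint := (pairwiseDisjoint_insert_of_notMem hvD).2
    ⟨hf.disjoint, fun u hu => hv ▸ disjoint_singleton_left.2 (hy u hu)⟩
  adj := by
    rintro u (rfl | hu) u' (rfl | hu') huu'
    · exact absurd huu' (H.irrefl)
    · obtain ⟨a, ha, hay⟩ := hadj u' hu' huu'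
      exact ⟨y, hv ▸ rfl, a, ha, hay.symm⟩
    · obtain ⟨a, ha, hay⟩ := hadj u hu huu'.symm
      exact ⟨a, ha, y, hv ▸ rfl, hay⟩
    · exact hf.adj u hu u' hu' huu'

theorem IsRootedModel.insert_vertex (hf : IsRootedModel G H U D A f) {v : W} {y : V}
    (hv : v ∉ D) (hyA : y ∉ A) (hadj : ∀ u ∈ D, H.Adj v u → ∃ a ∈ f u, G.Adj a y)
    (hbd : boundary G U (insert y A) = insert y (boundary G U A)) :
    ∃ f', IsRootedModel G H U (insert v D) (insert y A) f' := by
  classical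
  have hself : Function.update f v {y} v = {y} := Function.update_self ..
  have hD : EqOn f (Function.update f v {y}) D := fun u hu =>
    (Function.update_of_ne (ne_of_mem_of_not_mem hu hv) ..).symm
  refine ⟨Function.update f v {y}, (hf.congr hD).insert_singleton hself hv (fun u hu => ?_)
    fun u hu huv => ?_, forall_mem_insert.2 ⟨?_, fun u hu => ?_⟩,
    forall_mem_insert.2 ⟨?_, fun u hu => ?_⟩⟩
  · exact hD hu ▸ fun h => hyA (hf.subset u hu h)
  · exact hD hu ▸ hadj u hu huv
  · simp
  · exact hD hu ▸ (hf.subset u hu).trans (subset_insert y A)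
  · exact ⟨y, by simp, hbd ▸ mem_insert y _⟩
  · rw [← hD hu, hbd]
    exact (hf.rooted u hu).mono (inter_subset_inter_right _ (subset_insert y _))

theorem IsRootedModel.exists_of_isLinkage {P : V → Set V} (hf : IsRootedModel G H U D C f)
    (hP : IsLinkage G U C B P) (hCB : C ⊆ B) : ∃ f', IsRootedModel G H U D B f' := by
  obtain rfl | ⟨u₀, hu₀⟩ := D.eq_empty_or_nonempty
  · exact ⟨f, isRootedModel_empty⟩
  have : Nonempty V := (hf.rooted u₀ hu₀).to_type
  choose! r hrf hrC using hf.rooted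
  have hdisj (u) (hu : u ∈ D) (u') (hu' : u' ∈ D) (hne : u ≠ u') : Disjoint (f u) (P (r u')) := by
    refine (disjoint_insert_right.2 ⟨fun h => ?_, ?_⟩).mono_right (hP.subset _ (hrC u' hu'))
    · exact disjoint_left.1 (hf.disjoint hu hu' hne) h (hrf u' hu')
    · exact disjoint_sdiff_right.mono_left (hf.subset u hu)
  refine ⟨fun u => f u ∪ P (r u), ⟨fun u hu => ?_, fun u hu u' hu' hne => ?_,
    fun u hu u' hu' huu' => ?_⟩, fun u hu => ?_, fun u hu => ?_⟩
  · exact induce_union_connected (hf.connected u hu).preconnected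
      (hP.connected _ (hrC u hu)).preconnected ⟨r u, hrf u hu, hP.mem _ (hrC u hu)⟩
  · have hrr' : r u ≠ r u' := fun h =>
      disjoint_left.1 (hf.disjoint hu hu' hne) (hrf u hu) (h ▸ hrf u' hu')
    simp only [Function.onFun, disjoint_union_left, disjoint_union_right]
    exact ⟨⟨hf.disjoint hu hu' hne, (hdisj u' hu' u hu hne.symm).symm⟩,
      hdisj u hu u' hu' hne, hP.disjoint (hrC u hu) (hrC u' hu') hrr'⟩
  · obtain ⟨a, ha, b, hb, hab⟩ := hf.adj u hu u' hu' huu'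
    exact ⟨a, .inl ha, b, .inl hb, hab⟩
  · refine union_subset ((hf.subset u hu).trans hCB) ((hP.subset _ (hrC u hu)).trans ?_)
    exact insert_subset (hCB (hrC u hu).1) sdiff_subset
  · exact (hP.meets _ (hrC u hu)).mono (inter_subset_inter_left _ subset_union_right)

theorem lt_ncard_boundary_of_maximal [Finite V]
    (hA : Maximal (fun A => HasLayout G U w A ∧ (boundary G U A).ncard ≤ m) A)
    (hB : HasLayout G U w B) (hAC : A ⊂ C) (hCB : C ⊆ B) : m < (boundary G U C).ncard := by
  obtain ⟨M, ⟨hCM, hMB⟩, hM⟩ := exists_min_image {M | C ⊆ M ∧ M ⊆ B}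
    (fun M => (boundary G U M).ncard) (toFinite _) ⟨C, subset_rfl, hCB⟩
  refine lt_of_not_ge fun hle => (hAC.trans_subset hCM).not_subset (hA.2 ⟨?_, ?_⟩ ?_)
  · exact hB.of_boundaryMinimal hMB fun M' hMM' hM'B => hM M' ⟨hCM.trans hMM', hM'B⟩
  · exact (hM C ⟨subset_rfl, hCB⟩).trans hle
  · exact hAC.subset.trans hCM

theorem exists_isLinkage_of_maximal [Finite V]
    (hA : Maximal (fun A => HasLayout G U w A ∧ (boundary G U A).ncard ≤ m) A) (hm : m + 1 ≤ w)
    {y : V} (hyU : y ∈ U) (hyA : y ∉ A) :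
    boundary G U (insert y A) = insert y (boundary G U A) ∧ ∃ A' P, insert y A ⊆ A' ∧
      Maximal (fun A => HasLayout G U w A ∧ (boundary G U A).ncard ≤ m + 1) A' ∧
      IsLinkage G U (insert y A) A' P := by
  have hle : (insert y (boundary G U A)).ncard ≤ m + 1 :=
    (ncard_insert_le _ _).trans (Nat.add_le_add_right hA.prop.2 1)
  have hle' := (ncard_le_ncard boundary_insert_subset).trans hle
  have hlayout : HasLayout G U w (insert y A) := hA.prop.1.step hyU (hle'.trans hm)
  obtain ⟨A', hAA', hA'⟩ := Finite.exists_le_maximal (p := fun A =>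
    HasLayout G U w A ∧ (boundary G U A).ncard ≤ m + 1) ⟨hlayout, hle'⟩
  have hlarge (C) (hAC : insert y A ⊆ C) (hCA' : C ⊆ A') : m + 1 ≤ (boundary G U C).ncard :=
    lt_ncard_boundary_of_maximal hA hA'.prop.1 ((ssubset_insert hyA).trans_subset hAC) hCA'
  obtain ⟨P, hP⟩ := BoundaryMinimal.exists_isLinkage
    (fun C hAC hCA' => hle'.trans (hlarge C hAC hCA')) hAA'
  exact ⟨eq_of_subset_of_ncard_le boundary_insert_subset (hle.trans (hlarge _ subset_rfl hAA')),
    A', P, hAA', hA', hP⟩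

theorem exists_isRootedModel [Finite V] [Finite W] (hH : H.IsAcyclic)
    (hU : ¬HasLayout G U w U) (D : Set W) (hD : D.ncard ≤ w) :
    ∃ A f, Maximal (fun A => HasLayout G U w A ∧ (boundary G U A).ncard ≤ D.ncard) A ∧
      IsRootedModel G H U D A f := by
  induction D using WellFoundedLT.induction with | ind D ih
  rcases D.eq_empty_or_nonempty with rfl | hne
  · obtain ⟨A, -, hA⟩ := Finite.exists_le_maximal (p := fun A =>
      HasLayout G U w A ∧ (boundary G U A).ncard ≤ (∅ : Set W).ncard) ⟨.empty, by simp⟩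
    exact ⟨A, fun _ => ∅, hA, isRootedModel_empty⟩
  obtain ⟨v, hv, hleaf⟩ := exists_mem_subsingleton_neighborSet_inter hH hne
  have hcard : (D \ {v}).ncard + 1 = D.ncard := ncard_sdiff_singleton_add_one hv
  obtain ⟨A, f, hA, hf⟩ := ih (D \ {v}) (sdiff_singleton_ssubset.2 hv) (by omega)
  have hUA : ¬U ⊆ A := fun h => hU (h.antisymm hA.prop.1.subset ▸ hA.prop.1)
  obtain ⟨y, hyU, hyA, hadj⟩ := hf.exists_vertex hUA
    (hleaf.anti (inter_subset_inter_right _ sdiff_subset))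
  obtain ⟨hbd, A', P, hAA', hA', hP⟩ :=
    exists_isLinkage_of_maximal hA (hcard.trans_le hD) hyU hyA
  obtain ⟨f', hf'⟩ := hf.insert_vertex (v := v) (fun h => h.2 rfl) hyA hadj hbd
  obtain ⟨f'', hf''⟩ := hf'.exists_of_isLinkage hP hAA'
  rw [insert_sdiff_singleton, insert_eq_of_mem hv] at hf''
  exact ⟨A', f'', hcard ▸ hA', hf''⟩

theorem exists_hasLayout_hasMinor [Finite V] [Finite W] (hH : H.IsAcyclic)
    (hU : ¬HasLayout G U (Nat.card W) U) :
    ∃ A, HasLayout G U (Nat.card W) A ∧ HasMinor (G.induce A) H := by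
  obtain ⟨A, f, hA, hf⟩ := exists_isRootedModel hH hU univ (ncard_univ W).le
  exact ⟨A, hA.prop.1, hasMinor_induce_iff.2 ⟨f, hf.toIsMinorModelOn, hf.subset⟩⟩

end PathWidth

section PackingOrDeletion

variable {U : Set V} {w : ℕ}

theorem packs_hasMinor_or_exists_hasLayout [Finite V] [Finite W] (hH : H.IsAcyclic) (k : ℕ)
    (U : Set V) :
    Packs (fun _ : Fin k => fun S => HasMinor (G.induce S) H) U ∨
      ∃ X : Set V, X.ncard ≤ Nat.card W * k ∧ HasLayout G (U \ X) (Nat.card W) (U \ X) := by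
  induction k generalizing U with
  | zero => exact .inl (packs_of_isEmpty _ _)
  | succ k ih =>
    by_cases hU : HasLayout G U (Nat.card W) U
    · exact .inr ⟨∅, by simp, by rwa [sdiff_empty]⟩
    obtain ⟨A, hA, hAH⟩ := exists_hasLayout_hasMinor hH hU
    obtain h | ⟨X, hX, hXU⟩ := ih (U \ A)
    · exact .inl (h.cons hA.subset hAH)
    refine .inr ⟨X ∪ boundary G U A, (ncard_union_le _ _).trans ?_, ?_⟩
    · exact Nat.add_le_add hX hA.ncard_boundary_le
    have hsub : U \ (X ∪ boundary G U A) ⊆ U := sdiff_subset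
    have hboundary : boundary G (U \ (X ∪ boundary G U A))
        (A ∩ (U \ (X ∪ boundary G U A))) = ∅ := by
      refine eq_empty_of_forall_notMem ?_
      rintro v ⟨⟨hvA, hv⟩, u, hu, huA, hvu⟩
      exact hv.2 (.inr ⟨hvA, u, hu.1, fun h => huA ⟨h, hu⟩, hvu⟩)
    have hlayout := (hA.restrict hsub).append hboundary <| hXU.mono <| by
      rintro v ⟨hv, hvA⟩
      exact ⟨⟨hv.1, fun h => hvA ⟨h, hv⟩⟩, fun h => hv.2 (.inl h)⟩
    rwa [union_sdiff_cancel inter_subset_right] at hlayout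

theorem IsConnectedProperty.packs_or_exists_not [Finite V] {Q : Set V → Prop}
    (hQ : IsConnectedProperty G Q) (hU : HasLayout G U w U) (k : ℕ) :
    Packs (fun _ : Fin k => Q) U ∨ ∃ X : Set V, X.ncard ≤ (w + 1) * k ∧ ¬Q (U \ X) := by
  induction k generalizing U with
  | zero => exact .inl (packs_of_isEmpty _ _)
  | succ k ih =>
    by_cases hQU : Q U
    swap
    · exact .inr ⟨∅, by simp, by rwa [sdiff_empty]⟩
    have h₀ : ¬Q ∅ := fun h => by
      obtain ⟨S, hS, hSconn, -⟩ := hQ.exists_connected ∅ h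
      exact (nonempty_coe_sort.1 hSconn.nonempty).not_subset_empty hS
    obtain ⟨B, A, Z, hAU, hB, hA, hZ, hcut, hrest⟩ := hU.exists_first_cut h₀ hQU
    obtain h | ⟨X, hX, hXQ⟩ := ih hrest
    · exact .inl (h.cons hAU hA)
    refine .inr ⟨X ∪ Z, (ncard_union_le _ _).trans (Nat.add_le_add hX hZ), fun h => ?_⟩
    obtain ⟨S, hS, hSconn, hSQ⟩ := hQ.exists_connected _ h
    obtain ⟨hSU, hSXZ⟩ := subset_sdiff.1 hS
    obtain ⟨hSX, hSZ⟩ := disjoint_union_right.1 hSXZ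
    obtain hSB | hSA := hcut S hSU hSconn hSZ
    · exact hB (hQ.mono hSB hSQ)
    · exact hXQ (hQ.mono (subset_sdiff.2 ⟨hSA, hSX⟩) hSQ)

end PackingOrDeletion

section DisjointSubfamilies

variable {α : Type*} {U Z : Set V} {w n : ℕ}

theorem card_filter_not_disjoint_le [Finite V] {S : α → Set V} {I : Finset α}
    [DecidablePred fun a => ¬Disjoint (S a) Z]
    (hI : (I : Set α).PairwiseDisjoint S) :
    (I.filter fun a => ¬Disjoint (S a) Z).card ≤ Z.ncard := by
  have hmeet (a : I.filter fun a => ¬Disjoint (S a) Z) : ∃ x ∈ S a, x ∈ Z :=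
    not_disjoint_iff.1 (Finset.mem_filter.1 a.2).2
  choose f hfS hfZ using hmeet
  rw [← Finset.card_attach, ← ncard_coe_finset]
  refine ncard_le_ncard_of_injOn f (fun a _ => hfZ a) fun a _ b _ hab => Subtype.ext ?_
  exact hI.elim (Finset.mem_filter.1 a.2).1 (Finset.mem_filter.1 b.2).1
    (not_disjoint_iff.2 ⟨f a, hfS a, hab ▸ hfS b⟩)

open scoped Classical in
theorem card_le_card_filter_subset_add [Finite V] {S : α → Set V} {I : Finset α} {B C : Set V}
    (hI : (I : Set α).PairwiseDisjoint S)
    (hcut : ∀ a ∈ I, Disjoint (S a) Z → S a ⊆ B ∨ S a ⊆ C) :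
    I.card ≤ (I.filter (S · ⊆ B)).card + (I.filter (S · ⊆ C)).card + Z.ncard := by
  have hcover : I ⊆ I.filter (S · ⊆ B) ∪ I.filter (S · ⊆ C) ∪
      I.filter (fun a => ¬Disjoint (S a) Z) := by
    intro a ha
    simp only [Finset.mem_union, Finset.mem_filter, ha, true_and]
    exact or_iff_not_imp_right.2 fun h => hcut a ha (not_not.1 h)
  calc I.card ≤ _ := Finset.card_le_card hcover
    _ ≤ _ := Finset.card_union_le _ _
    _ ≤ _ := Nat.add_le_add (Finset.card_union_le _ _) (card_filter_not_disjoint_le hI)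

/-- The sets `S a` with `a ∈ I` are disjoint, connected in `G` and contained in `U`. -/
structure IsConnectedFamily (G : SimpleGraph V) (U : Set V) (S : α → Set V) (I : Finset α) :
    Prop where
  subset : ∀ a ∈ I, S a ⊆ U
  connected : ∀ a ∈ I, (G.induce (S a)).Connected
  disjoint : (I : Set α).PairwiseDisjoint S

open scoped Classical in
theorem IsConnectedFamily.filter_subset {S : α → Set V} {I : Finset α} {C : Set V}
    (h : IsConnectedFamily G U S I) : IsConnectedFamily G C S (I.filter (S · ⊆ C)) where
  subset _ ha := (Finset.mem_filter.1 ha).2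
  connected _ ha := h.connected _ (Finset.mem_filter.1 ha).1
  disjoint := h.disjoint.subset (Finset.coe_subset.2 (Finset.filter_subset _ _))

-- Stop the layout as soon as some family has `n` members inside. The members of another family lost
-- outside `U \ A` are at most `n - 1`, plus those meeting a cut of size at most `w + 1`.
open scoped Classical in
theorem HasLayout.exists_cut_of_isConnectedFamily [Finite V] {S : κ → α → Set V} {D : Finset κ}
    {I : κ → Finset α} (hU : HasLayout G U w U)
    (hI : ∀ c ∈ D, IsConnectedFamily G U (S c) (I c)) (hn : 0 < n)
    (hlarge : ∃ c ∈ D, n ≤ (I c).card) :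
    ∃ A, HasLayout G (U \ A) w (U \ A) ∧ (∃ c ∈ D, n ≤ ((I c).filter (S c · ⊆ A)).card) ∧
      ∀ c ∈ D, (I c).card ≤ ((I c).filter (S c · ⊆ U \ A)).card + (n + w) := by
  obtain ⟨B, A, Z, -, hB, hA, hZ, hcut, hrest⟩ := hU.exists_first_cut
    (P := fun A => ∃ c ∈ D, n ≤ ((I c).filter (S c · ⊆ A)).card)
    (by
      rintro ⟨c, hc, hle⟩
      obtain ⟨a, ha⟩ := Finset.card_pos.1 (hn.trans_le hle)
      obtain ⟨haI, hempty⟩ := Finset.mem_filter.1 ha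
      exact (nonempty_coe_sort.1 ((hI c hc).connected a haI).nonempty).not_subset_empty hempty)
    (by
      obtain ⟨c, hc, hle⟩ := hlarge
      exact ⟨c, hc, by rwa [Finset.filter_true_of_mem (hI c hc).subset]⟩)
  refine ⟨A, hrest, hA, fun c hc => ?_⟩
  have hfew : ((I c).filter (S c · ⊆ B)).card < n := not_le.1 fun h => hB ⟨c, hc, h⟩
  have hcount := card_le_card_filter_subset_add (hI c hc).disjoint fun a ha =>
    hcut _ ((hI c hc).subset a ha) ((hI c hc).connected a ha)
  omega

theorem pairwiseDisjoint_update_of_erase [DecidableEq κ] {D : Finset κ} {f : κ → Set V} {c : κ}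
    {A : Set V} (hf : (D.erase c : Set κ).PairwiseDisjoint f)
    (hA : ∀ c' ∈ D.erase c, Disjoint A (f c')) :
    (D : Set κ).PairwiseDisjoint (Function.update f c A) := by
  have hmem {c' : κ} (hc' : c' ∈ D) (hne : c' ≠ c) := Finset.mem_erase.2 ⟨hne, hc'⟩
  intro c₁ h₁ c₂ h₂ hne
  simp only [Function.onFun, Function.update_apply]
  split_ifs with e₁ e₂ e₂
  · exact absurd (e₁.trans e₂.symm) hne
  · exact hA c₂ (hmem h₂ e₂)
  · exact (hA c₁ (hmem h₁ e₁)).symm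
  · exact hf (hmem h₁ e₁) (hmem h₂ e₂) hne

theorem exists_disjoint_subfamilies [Finite V] {S : κ → α → Set V} (D : Finset κ)
    (hU : HasLayout G U w U) {I : κ → Finset α}
    (hI : ∀ c ∈ D, IsConnectedFamily G U (S c) (I c)) (hn : 0 < n)
    (hcard : ∀ c ∈ D, D.card * (n + w) ≤ (I c).card) :
    ∃ J : κ → Finset α, (∀ c ∈ D, J c ⊆ I c ∧ n ≤ (J c).card) ∧
      (D : Set κ).PairwiseDisjoint fun c => ⋃ a ∈ J c, S c a := by
  classical
  induction D using Finset.strongInduction generalizing U I with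
  | H D ih =>
  obtain rfl | ⟨c₀, hc₀⟩ := D.eq_empty_or_nonempty
  · exact ⟨I, by simp, by simp⟩
  have hlarge : n ≤ (I c₀).card :=
    (Nat.le_add_right n w).trans <|
      (Nat.le_mul_of_pos_left _ (Finset.card_pos.2 ⟨c₀, hc₀⟩)).trans (hcard c₀ hc₀)
  obtain ⟨A, hrest, ⟨c, hc, hcA⟩, hloss⟩ :=
    hU.exists_cut_of_isConnectedFamily hI hn ⟨c₀, hc₀, hlarge⟩
  obtain ⟨J, hJ, hJdisj⟩ := ih (D.erase c) (Finset.erase_ssubset hc) hrest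
    (fun c' hc' => (hI c' (Finset.mem_of_mem_erase hc')).filter_subset) fun c' hc' => by
      have hmany := hcard c' (Finset.mem_of_mem_erase hc')
      rw [← Finset.card_erase_add_one hc, Nat.succ_mul] at hmany
      exact Nat.le_of_add_le_add_right (hmany.trans (hloss c' (Finset.mem_of_mem_erase hc')))
  have hAc : ⋃ a ∈ (I c).filter (S c · ⊆ A), S c a ⊆ A :=
    iUnion₂_subset fun a ha => (Finset.mem_filter.1 ha).2
  have hAJ (c') (hc' : c' ∈ D.erase c) : Disjoint A (⋃ a ∈ J c', S c' a) :=
    disjoint_iUnion₂_right.2 fun a ha =>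
      (subset_sdiff.1 (Finset.mem_filter.1 ((hJ c' hc').1 ha)).2).2.symm
  refine ⟨Function.update J c ((I c).filter (S c · ⊆ A)), fun c' hc' => ?_, ?_⟩
  · obtain rfl | hne := eq_or_ne c' c
    · simpa only [Function.update_self] using ⟨Finset.filter_subset _ _, hcA⟩
    · have hc'J := hJ c' (Finset.mem_erase.2 ⟨hne, hc'⟩)
      simpa only [Function.update_of_ne hne] using
        ⟨hc'J.1.trans (Finset.filter_subset _ _), hc'J.2⟩
  · simp only [Function.apply_update (fun c (K : Finset α) => ⋃ a ∈ K, S c a)]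
    exact pairwiseDisjoint_update_of_erase hJdisj fun c' hc' => (hAJ c' hc').mono_left hAc

end DisjointSubfamilies

section BoundedPathwidth

variable {U : Set V} {w k : ℕ}

theorem IsConnectedProperty.exists_isConnectedFamily {α : Type*} [Fintype α] {Q : Set V → Prop}
    (hQ : IsConnectedProperty G Q) (h : Packs (fun _ : α => Q) U) :
    ∃ S : α → Set V, IsConnectedFamily G U S Finset.univ ∧ ∀ a, Q (S a) := by
  obtain ⟨g, hg, hgU⟩ := h
  choose S hSg hSconn hSQ using fun a => hQ.exists_connected (g a) (hgU a).2
  exact ⟨S, ⟨fun a _ => (hSg a).trans (hgU a).1, fun a _ => hSconn a,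
    fun a _ b _ hne => (hg hne).mono (hSg a) (hSg b)⟩, hSQ⟩

theorem packs_prod_of_forall_packs [Finite V] [Finite κ] {Q : κ → Set V → Prop}
    (hQ : ∀ c, IsConnectedProperty G (Q c)) (hU : HasLayout G U w U) (hk : 0 < k)
    (h : ∀ c, Packs (fun _ : Fin (Nat.card κ * (k + w)) => Q c) U) :
    Packs (fun p : κ × Fin k => Q p.1) U := by
  have := Fintype.ofFinite κ
  choose S hS hSQ using fun c => (hQ c).exists_isConnectedFamily (h c)
  obtain ⟨J, hJ, hJdisj⟩ := exists_disjoint_subfamilies Finset.univ hU (fun c _ => hS c) hk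
    (fun c _ => by simp)
  let e (c : κ) : Fin k ↪o Fin (Nat.card κ * (k + w)) :=
    (J c).orderEmbOfCardLe (hJ c (Finset.mem_univ c)).2
  have he (c : κ) (a : Fin k) : S c (e c a) ⊆ ⋃ a ∈ J c, S c a :=
    subset_biUnion_of_mem (u := S c) (Finset.orderEmbOfCardLe_mem _ _ a)
  refine ⟨fun p => S p.1 (e p.1 p.2), ?_, fun p => ⟨(hS _).subset _ (Finset.mem_univ _), hSQ _ _⟩⟩
  rintro ⟨c, a⟩ ⟨c', a'⟩ hne
  obtain rfl | hcc' := eq_or_ne c c'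
  · refine (hS c).disjoint (Finset.mem_univ _) (Finset.mem_univ _) fun haa' => hne ?_
    exact congrArg (c, ·) ((e c).injective haa')
  · exact (hJdisj (Finset.mem_univ c) (Finset.mem_univ c') hcc').mono (he c a) (he c' a')

theorem packs_packs_or_exists_not_packs [Finite V] [Finite κ] {Q : κ → Set V → Prop}
    (hQ : ∀ c, IsConnectedProperty G (Q c)) (hU : HasLayout G U w U) (hk : 0 < k) :
    Packs (fun _ : Fin k => Packs Q) U ∨
      ∃ X : Set V, X.ncard ≤ (w + 1) * (Nat.card κ * (k + w)) ∧ ¬Packs Q (U \ X) := by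
  by_cases h : ∀ c, Packs (fun _ : Fin (Nat.card κ * (k + w)) => Q c) U
  · exact .inl (packs_prod_of_forall_packs hQ hU hk h).curry
  · obtain ⟨c, hc⟩ := not_forall.1 h
    obtain ⟨X, hX, hXQ⟩ := ((hQ c).packs_or_exists_not hU _).resolve_left hc
    refine .inr ⟨X, hX, fun ⟨g, _, hg⟩ => hXQ ?_⟩
    exact (hQ c).mono (hg c).1 (hg c).2

theorem HasLayout.packs_hasMinor_or_exists [Finite V] [Finite H.ConnectedComponent]
    (hU : HasLayout G U w U) (hk : 0 < k) :
    Packs (fun _ : Fin k => fun S => HasMinor (G.induce S) H) U ∨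
      ∃ X : Set V, X.ncard ≤ (w + 1) * (Nat.card H.ConnectedComponent * (k + w)) ∧
        ¬HasMinor (G.induce (U \ X)) H := by
  simp only [hasMinor_induce_iff_packs]
  exact packs_packs_or_exists_not_packs
    (fun c => isConnectedProperty_containsModel c.connected_toSimpleGraph) hU hk

end BoundedPathwidth

section Families

variable {ι : Type*} {𝓦 : ι → Type*} {F : ∀ i, SimpleGraph (𝓦 i)} {k : ℕ}

theorem isFPacking_or_exists_forall_not_hasMinor [Finite V] [Fintype ι]
    [∀ i, Finite (F i).ConnectedComponent] {i₀ : ι} [Finite (𝓦 i₀)] (hF : (F i₀).IsAcyclic)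
    (hk : 0 < k) :
    (∃ S : Fin k → Set V, IsFPacking G F k S) ∨
      ∃ X : Set V, X.ncard ≤ Nat.card (𝓦 i₀) * k + (∑ i, Nat.card (F i).ConnectedComponent) *
          ((Nat.card (𝓦 i₀) + 1) * (k + Nat.card (𝓦 i₀))) ∧
        ∀ i, ¬HasMinor (G.induce Xᶜ) (F i) := by
  have hpacks {i : ι} {U : Set V}
      (h : Packs (fun _ : Fin k => fun S => HasMinor (G.induce S) (F i)) U) :
      ∃ S : Fin k → Set V, IsFPacking G F k S :=
    let ⟨S, hS, hSF⟩ := h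
    ⟨S, hS, fun a => ⟨i, (hSF a).2⟩⟩
  obtain h | ⟨X, hX, hlayout⟩ := packs_hasMinor_or_exists_hasLayout (G := G) hF k univ
  · exact .inl (hpacks h)
  by_cases hpack : ∃ i, Packs (fun _ : Fin k => fun S => HasMinor (G.induce S) (F i)) (univ \ X)
  · exact .inl (hpack.elim fun _ => hpacks)
  choose Y hY hYF using fun i =>
    (hlayout.packs_hasMinor_or_exists hk).resolve_left (not_exists.1 hpack i)
  refine .inr ⟨X ∪ ⋃ i, Y i, (ncard_union_le _ _).trans (Nat.add_le_add hX ?_), fun i hi => ?_⟩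
  · calc (⋃ i, Y i).ncard ≤ ∑ i, (Y i).ncard := ncard_iUnion_le_of_fintype Y
      _ ≤ _ := by
        rw [Finset.sum_mul]
        exact Finset.sum_le_sum fun i _ => (hY i).trans_eq (by ring)
  · refine hYF i (hasMinor_induce_mono ?_ hi)
    rw [compl_union, compl_eq_univ_sdiff X]
    exact inter_subset_inter_right _ (compl_subset_compl.2 (subset_iUnion Y i))

theorem bddAbove_isFPacking [Finite V] [∀ i, Nonempty (𝓦 i)] :
    BddAbove {k | ∃ S : Fin k → Set V, IsFPacking G F k S} := by
  refine ⟨Nat.card V, ?_⟩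
  rintro k ⟨S, hS, hSF⟩
  have hne (a : Fin k) : (S a).Nonempty := by
    obtain ⟨i, f, hf, -⟩ := hSF a
    exact ⟨_, (hf (Classical.arbitrary _)).nonempty.some.1.2⟩
  choose x hx using hne
  have hinj : Function.Injective x := fun a b hab =>
    hS.eq (not_disjoint_iff.2 ⟨x a, hx a, hab ▸ hx b⟩)
  simpa using Nat.card_le_card_of_injective x hinj

theorem not_exists_isFPacking_nuF_add_one [Finite V] [∀ i, Nonempty (𝓦 i)] :
    ¬∃ S : Fin (nuF G F + 1) → Set V, IsFPacking G F (nuF G F + 1) S :=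
  fun h => Nat.not_succ_le_self _ (le_csSup bddAbove_isFPacking h)

theorem tauF_le_ncard {X : Set V} (hX : ∀ i, ¬HasMinor (G.induce Xᶜ) (F i)) :
    tauF G F ≤ X.ncard :=
  Nat.sInf_le ⟨X, rfl, hX⟩

-- The graph without vertices is a minor of every graph, so there is no transversal and `tauF` takes
-- the junk value `sInf ∅ = 0`.
theorem tauF_eq_zero_of_isEmpty (i : ι) [IsEmpty (𝓦 i)] : tauF G F = 0 := by
  refine Nat.sInf_eq_zero.2 (.inr <| eq_empty_of_forall_notMem ?_)
  rintro _ ⟨X, -, hX⟩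
  exact hX i ⟨fun _ => ∅, isEmptyElim, isEmptyElim, isEmptyElim⟩

theorem tauF_eq_zero_of_not_exists_isFPacking_one
    (h : ¬∃ S : Fin 1 → Set V, IsFPacking G F 1 S) : tauF G F = 0 := by
  refine Nat.le_zero.1 ((tauF_le_ncard (X := ∅) fun i hi => h ?_).trans_eq (ncard_empty V))
  exact ⟨fun _ => ∅ᶜ, Subsingleton.pairwise, fun _ => ⟨i, hi⟩⟩

end Families

end ErdosPosa

open ErdosPosa in
theorem erdos_posa_linear_for_forests_general {V ι : Type*} [Finite V] [Fintype ι]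
    {W : ι → Type*} (G : SimpleGraph V) (F : ∀ i, SimpleGraph (W i))
    [∀ i, Finite (F i).ConnectedComponent] (i₀ : ι) [Finite (W i₀)]
    (hforest : (F i₀).IsAcyclic) :
    tauF G F ≤ 2 * (Nat.card (W i₀) +
      (∑ i, Nat.card (F i).ConnectedComponent) * (Nat.card (W i₀) + 1) ^ 2) * nuF G F := by
  by_cases hempty : ∃ i, IsEmpty (W i)
  · obtain ⟨i, _⟩ := hempty
    exact (tauF_eq_zero_of_isEmpty i).trans_le (Nat.zero_le _)
  simp only [not_exists, not_isEmpty_iff] at hempty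
  have hmax := not_exists_isFPacking_nuF_add_one (G := G) (F := F)
  obtain hν | hν := (nuF G F).eq_zero_or_pos
  · rw [hν] at hmax
    exact (tauF_eq_zero_of_not_exists_isFPacking_one hmax).trans_le (Nat.zero_le _)
  obtain ⟨X, hX, hXF⟩ :=
    (isFPacking_or_exists_forall_not_hasMinor hforest (Nat.succ_pos _)).resolve_left hmax
  generalize nuF G F = ν at *
  generalize Nat.card (W i₀) = w at *
  generalize ∑ i, Nat.card (F i).ConnectedComponent = N at *
  have hw : ν + 1 + w ≤ 2 * ν * (w + 1) := by nlinarith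
  calc tauF G F ≤ X.ncard := tauF_le_ncard hXF
    _ ≤ w * (ν + 1) + N * ((w + 1) * (ν + 1 + w)) := hX
    _ ≤ w * (2 * ν) + N * ((w + 1) * (2 * ν * (w + 1))) := by gcongr; omega
    _ = 2 * (w + N * (w + 1) ^ 2) * ν := by ring

/-- Main theorem: if the finite family `F` contains a forest, then there is a constant `c`
(depending only on `F`) with `τ_F(G) ≤ c · ν_F(G)` for every graph `G`. -/
theorem erdos_posa_linear_for_forests {ι : Type} [Fintype ι] {W : ι → Type}
    [∀ i, Fintype (W i)] (F : ∀ i, SimpleGraph (W i)) (i₀ : ι)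
    (hforest : (F i₀).IsAcyclic) :
    ∃ c : ℕ, ∀ (V : Type) [Fintype V] (G : SimpleGraph V), tauF G F ≤ c * nuF G F :=
  ⟨_, fun _ _ G => erdos_posa_linear_for_forests_general G F i₀ hforest⟩
end

section
/- For every t ∈ ℕ there exists a constant c = c(t) such that for every graph G and every k ∈ ℕ, either G contains k vertex-disjoint subgraphs each with pathwidth at least t+1, or G has a vertex subset X of size at most c·k such that G − X has pathwidth at most t. -/
open SimpleGraph Set

/-!
Build up vertex sets one vertex at a time, starting from `∅` and keeping fewer than
`N = 3 ^ (t + 2)` vertices in the inner boundary. If this process cannot exhaust the graph, then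
any forest `H` on fewer than `N` vertices is a minor: at a buildable set that is maximal for its
boundary size a new vertex enlarges the boundary by exactly one, so it can serve as the next
branch set, and Menger's theorem together with submodularity of the boundary size carries all
branch sets to the boundary of the next maximal set. The ternary tree of height `t + 1` is such an
`H`, and it forces pathwidth more than `t`: of three branches that need big bags, the bag of the
middle one must also meet the rest of the tree.

In both cases a graph of pathwidth more than `t` has a buildable set of pathwidth more than `t`.
Let `X = A ∪ {v}` be the first such set in its construction. Deleting `v` and the boundary of `X`,
at most `N` vertices, leaves pathwidth at most `t` inside `X` and separates it from the rest, so
`X` is one member of the packing and induction on `k` applies to the complement of `X`.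
-/

section Connectivity

variable {V : Type*} {G : SimpleGraph V}

theorem connected_induce_singleton (G : SimpleGraph V) (v : V) :
    (G.induce {v}).Connected :=
  .of_subsingleton

theorem exists_adj_of_connected_induce {S A : Set V} (hS : (G.induce S).Connected)
    (hA : (S ∩ A).Nonempty) (hA' : (S \ A).Nonempty) :
    ∃ x ∈ S ∩ A, ∃ y ∈ S \ A, G.Adj x y := by
  obtain ⟨a, haS, ha⟩ := hA
  obtain ⟨b, hbS, hb⟩ := hA'
  obtain ⟨walk⟩ := hS.preconnected ⟨a, haS⟩ ⟨b, hbS⟩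
  obtain ⟨d, -, hfst, hsnd⟩ := walk.exists_boundary_dart (Subtype.val ⁻¹' A) ha hb
  exact ⟨d.fst, ⟨d.fst.2, hfst⟩, d.snd, ⟨d.snd.2, hsnd⟩, d.adj⟩

theorem connected_induce_union_iUnion {ι : Sort*} {R : Set V} {S : ι → Set V}
    (hR : (G.induce R).Connected) (hS : ∀ i, (G.induce (R ∪ S i)).Connected) :
    (G.induce (R ∪ ⋃ i, S i)).Connected := by
  obtain ⟨r, hr⟩ := hR.nonempty
  refine G.induce_connected_of_patches r (Or.inl hr) ?_
  rintro v (hv | hv)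
  · exact ⟨R, subset_union_left, hr, hv, hR.preconnected _ _⟩
  · obtain ⟨i, hi⟩ := mem_iUnion.mp hv
    exact ⟨R ∪ S i, union_subset_union_right _ (subset_iUnion S i), Or.inl hr, Or.inr hi,
      (hS i).preconnected _ _⟩

end Connectivity

section InnerBoundary

variable {V : Type*} {G : SimpleGraph V} {X Y : Set V}

/-- The inner vertex boundary of `X` in `G`: the vertices of `X` with a neighbour outside `X`. -/
def innerBoundary (G : SimpleGraph V) (X : Set V) : Set V :=
  {v ∈ X | ∃ w ∉ X, G.Adj v w}

theorem innerBoundary_subset (G : SimpleGraph V) (X : Set V) : innerBoundary G X ⊆ X :=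
  sep_subset _ _

theorem innerBoundary_empty (G : SimpleGraph V) : innerBoundary G ∅ = ∅ :=
  subset_empty_iff.mp (innerBoundary_subset G ∅)

theorem innerBoundary_mono_left {G' : SimpleGraph V} (h : G' ≤ G) (X : Set V) :
    innerBoundary G' X ⊆ innerBoundary G X :=
  fun _ ⟨hv, w, hw, hvw⟩ => ⟨hv, w, hw, h hvw⟩

theorem innerBoundary_insert_subset (G : SimpleGraph V) (x : V) (X : Set V) :
    innerBoundary G (insert x X) ⊆ insert x (innerBoundary G X) := by
  rintro v ⟨rfl | hv, w, hw, hvw⟩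
  · exact mem_insert _ _
  · exact Or.inr ⟨hv, w, fun hwX => hw (Or.inr hwX), hvw⟩

theorem innerBoundary_deleteIncidenceSet {v : V} (hv : v ∈ X) :
    innerBoundary (G.deleteIncidenceSet v) X = innerBoundary G X \ {v} := by
  ext u
  simp only [innerBoundary, deleteIncidenceSet_adj, mem_ofPred_eq, mem_sdiff, mem_singleton_iff]
  constructor
  · rintro ⟨hu, w, hw, huw, huv, -⟩
    exact ⟨⟨hu, w, hw, huw⟩, huv⟩
  · rintro ⟨⟨hu, w, hw, huw⟩, huv⟩
    exact ⟨hu, w, hw, huw, huv, fun hwv => hw (hwv ▸ hv)⟩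

theorem ncard_innerBoundary_inter_add_union_le [Finite V] (G : SimpleGraph V) (X Y : Set V) :
    (innerBoundary G (X ∩ Y)).ncard + (innerBoundary G (X ∪ Y)).ncard ≤
      (innerBoundary G X).ncard + (innerBoundary G Y).ncard := by
  rw [← ncard_union_add_ncard_inter (innerBoundary G (X ∩ Y)),
    ← ncard_union_add_ncard_inter (innerBoundary G X)]
  refine Nat.add_le_add (ncard_le_ncard ?_) (ncard_le_ncard ?_)
  · rintro v (⟨⟨hX, hY⟩, w, hw, hvw⟩ | ⟨hX | hY, w, hw, hvw⟩)
    · by_cases hwX : w ∈ X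
      · exact Or.inr ⟨hY, w, fun hwY => hw ⟨hwX, hwY⟩, hvw⟩
      · exact Or.inl ⟨hX, w, hwX, hvw⟩
    · exact Or.inl ⟨hX, w, fun hwX => hw (Or.inl hwX), hvw⟩
    · exact Or.inr ⟨hY, w, fun hwY => hw (Or.inr hwY), hvw⟩
  · rintro v ⟨⟨⟨hX, hY⟩, -⟩, -, w, hw, hvw⟩
    exact ⟨⟨hX, w, fun hwX => hw (Or.inl hwX), hvw⟩, ⟨hY, w, fun hwY => hw (Or.inr hwY), hvw⟩⟩

end InnerBoundary

section Linkage

variable {V ι : Type*} {G : SimpleGraph V} {I : Set ι} {X Y Z : Set V} {f : ι → Set V}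
  {P Q : V → Set V}

/-- `f` assigns to the elements of `I` pairwise disjoint connected subsets of `X`, as the branch
sets of a minor model do. -/
structure IsBranchFamily (G : SimpleGraph V) (I : Set ι) (X : Set V) (f : ι → Set V) : Prop where
  subset : ∀ a ∈ I, f a ⊆ X
  connected : ∀ a ∈ I, (G.induce (f a)).Connected
  disjoint : I.PairwiseDisjoint f

theorem IsBranchFamily.mono_left {G' : SimpleGraph V} (hf : IsBranchFamily G I X f)
    (h : G ≤ G') : IsBranchFamily G' I X f :=
  ⟨hf.subset, fun a ha => (hf.connected a ha).mono (comap_monotone _ h), hf.disjoint⟩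

theorem IsBranchFamily.mono_right (hf : IsBranchFamily G I X f) (h : X ⊆ Y) :
    IsBranchFamily G I Y f :=
  ⟨fun a ha => (hf.subset a ha).trans h, hf.connected, hf.disjoint⟩

theorem IsBranchFamily.mono_index {J : Set ι} (hf : IsBranchFamily G I X f) (h : J ⊆ I) :
    IsBranchFamily G J X f :=
  ⟨fun a ha => hf.subset a (h ha), fun a ha => hf.connected a (h ha), hf.disjoint.subset h⟩

theorem forall_mem_insert_update [DecidableEq ι] {p : ι → Set V → Prop} {b : ι} {S : Set V}
    (hb : b ∉ I) (hS : p b S) (h : ∀ a ∈ I, p a (f a)) :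
    ∀ a ∈ insert b I, p a (Function.update f b S a) := by
  rintro a (rfl | ha)
  · rwa [Function.update_self]
  · rw [Function.update_of_ne (ne_of_mem_of_not_mem ha hb)]
    exact h a ha

theorem IsBranchFamily.insert_update [DecidableEq ι] (hf : IsBranchFamily G I X f) {b : ι}
    {S : Set V} (hb : b ∉ I) (hS : S ⊆ X) (hconn : (G.induce S).Connected)
    (hdisj : ∀ a ∈ I, Disjoint S (f a)) :
    IsBranchFamily G (insert b I) X (Function.update f b S) where
  subset := forall_mem_insert_update (p := fun _ S => S ⊆ X) hb hS hf.subset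
  connected := forall_mem_insert_update (p := fun _ S => (G.induce S).Connected) hb hconn
    hf.connected
  disjoint := by
    have hne {a : ι} (ha : a ∈ I) : Function.update f b S a = f a :=
      Function.update_of_ne (ne_of_mem_of_not_mem ha hb) _ _
    refine (pairwiseDisjoint_insert_of_notMem hb).mpr ⟨fun a ha c hc hac => ?_, fun a ha => ?_⟩
    · rw [Function.onFun, hne ha, hne hc]
      exact hf.disjoint ha hc hac
    · rw [Function.update_self, hne ha]
      exact hdisj a ha

/-- `P` links the inner boundary of `X` to that of `Y`, as the disjoint paths in Menger's theorem
do; only connectedness of the linking sets is ever used, so they need not be paths. -/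
structure IsLinkage (G : SimpleGraph V) (X Y : Set V) (P : V → Set V) : Prop
    extends IsBranchFamily G (innerBoundary G X) Y P where
  mem : ∀ v ∈ innerBoundary G X, v ∈ P v
  inter_subset : ∀ v ∈ innerBoundary G X, P v ∩ X ⊆ {v}
  meets : ∀ v ∈ innerBoundary G X, (P v ∩ innerBoundary G Y).Nonempty

/-- The set `S` together with the members of the linkage `P` that start at the inner boundary
vertices of `X` in `S`. -/
def prolong (G : SimpleGraph V) (X : Set V) (P : V → Set V) (S : Set V) : Set V :=
  S ∪ ⋃ v : ↥(S ∩ innerBoundary G X), P v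

theorem mem_prolong {S : Set V} {y : V} :
    y ∈ prolong G X P S ↔ y ∈ S ∨ ∃ v ∈ S, v ∈ innerBoundary G X ∧ y ∈ P v := by
  simp only [prolong, mem_union, mem_iUnion, Subtype.exists, mem_inter_iff, exists_prop, and_assoc]

theorem subset_prolong (S : Set V) : S ⊆ prolong G X P S :=
  subset_union_left

theorem prolong_subset (hP : IsLinkage G X Y P) {S : Set V} (hS : S ⊆ Y) :
    prolong G X P S ⊆ Y :=
  union_subset hS (iUnion_subset fun v => hP.subset v v.2.2)

theorem prolong_inter (hP : IsLinkage G X Y P) (S : Set V) : prolong G X P S ∩ X ⊆ S := by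
  rintro y ⟨hy, hyX⟩
  obtain hyS | ⟨v, hvS, hv, hyv⟩ := mem_prolong.mp hy
  · exact hyS
  · rwa [hP.inter_subset v hv ⟨hyv, hyX⟩]

theorem prolong_meets (hP : IsLinkage G X Y P) {S : Set V} (hS : (S ∩ innerBoundary G X).Nonempty) :
    (prolong G X P S ∩ innerBoundary G Y).Nonempty := by
  obtain ⟨v, hvS, hv⟩ := hS
  obtain ⟨y, hyv, hy⟩ := hP.meets v hv
  exact ⟨y, mem_prolong.mpr (Or.inr ⟨v, hvS, hv, hyv⟩), hy⟩

theorem connected_prolong (hP : IsLinkage G X Y P) {S : Set V} (hS : (G.induce S).Connected) :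
    (G.induce (prolong G X P S)).Connected :=
  connected_induce_union_iUnion hS fun v =>
    induce_union_connected hS.preconnected (hP.connected v v.2.2).preconnected
      ⟨v, v.2.1, hP.mem v v.2.2⟩

theorem disjoint_prolong (hP : IsLinkage G X Y P) {S T : Set V} (hS : S ⊆ X) (hT : T ⊆ X)
    (hST : Disjoint S T) : Disjoint (prolong G X P S) (prolong G X P T) := by
  rw [Set.disjoint_left] at hST ⊢
  intro y hyS hyT
  by_cases hyX : y ∈ X
  · exact hST (prolong_inter hP S ⟨hyS, hyX⟩) (prolong_inter hP T ⟨hyT, hyX⟩)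
  obtain ⟨u, huS, hu, hyu⟩ := (mem_prolong.mp hyS).resolve_left fun h => hyX (hS h)
  obtain ⟨v, hvT, hv, hyv⟩ := (mem_prolong.mp hyT).resolve_left fun h => hyX (hT h)
  have huv : u = v := hP.disjoint.elim_set hu hv y hyu hyv
  exact hST huS (huv ▸ hvT)

theorem IsBranchFamily.prolong (hf : IsBranchFamily G I X f) (hP : IsLinkage G X Y P)
    (hXY : X ⊆ Y) : IsBranchFamily G I Y fun a => prolong G X P (f a) where
  subset a ha := prolong_subset hP ((hf.subset a ha).trans hXY)
  connected a ha := connected_prolong hP (hf.connected a ha)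
  disjoint a ha b hb hab :=
    disjoint_prolong hP (hf.subset a ha) (hf.subset b hb) (hf.disjoint ha hb hab)

theorem IsLinkage.trans (hP : IsLinkage G X Z P) (hQ : IsLinkage G Z Y Q) (hXZ : X ⊆ Z)
    (hZY : Z ⊆ Y) : IsLinkage G X Y fun v => prolong G Z Q (P v) where
  toIsBranchFamily := hP.toIsBranchFamily.prolong hQ hZY
  mem v hv := subset_prolong _ (hP.mem v hv)
  inter_subset v hv _ hy :=
    hP.inter_subset v hv ⟨prolong_inter hQ (P v) ⟨hy.1, hXZ hy.2⟩, hy.2⟩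
  meets v hv := prolong_meets hQ (hP.meets v hv)

theorem isLinkage_singleton (hXY : X ⊆ Y) (h : innerBoundary G X ⊆ innerBoundary G Y) :
    IsLinkage G X Y fun v => {v} where
  subset _ hv := singleton_subset_iff.mpr (hXY hv.1)
  connected _ _ := connected_induce_singleton G _
  disjoint _ _ _ _ huv := disjoint_singleton.mpr huv
  mem v _ := mem_singleton v
  inter_subset _ _ := inter_subset_left
  meets v hv := ⟨v, mem_singleton v, h hv⟩

theorem IsLinkage.of_deleteIncidenceSet [DecidableEq V] {v w : V}
    (hP : IsLinkage (G.deleteIncidenceSet v) (insert w X) Y P) (hvX : v ∈ X) (hvY : v ∈ Y)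
    (hw : w ∉ X) (hvw : G.Adj v w)
    (hboundary : innerBoundary (G.deleteIncidenceSet v) (insert w X) =
      insert w (innerBoundary G X \ {v})) :
    IsLinkage G X Y (Function.update P v (insert v (P w))) := by
  have hle := G.deleteIncidenceSet_le v
  have hw' : w ∈ innerBoundary (G.deleteIncidenceSet v) (insert w X) :=
    hboundary ▸ mem_insert _ _
  have hsub : innerBoundary G X \ {v} ⊆ innerBoundary (G.deleteIncidenceSet v) (insert w X) :=
    hboundary ▸ subset_insert _ _
  have hinsert : insert v (innerBoundary G X \ {v}) = innerBoundary G X :=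
    insert_sdiff_self_of_mem ⟨hvX, w, hw, hvw⟩
  have hv : v ∉ innerBoundary G X \ {v} := fun h => h.2 rfl
  have hmeets {S T : Set V} (hST : S ⊆ T)
      (hS : (S ∩ innerBoundary (G.deleteIncidenceSet v) Y).Nonempty) :
      (T ∩ innerBoundary G Y).Nonempty :=
    hS.mono (inter_subset_inter hST (innerBoundary_mono_left hle Y))
  refine ⟨hinsert ▸ ((hP.toIsBranchFamily.mono_index hsub).mono_left hle).insert_update hv
    (insert_subset hvY (hP.subset w hw')) ?_ fun u hu => disjoint_insert_left.mpr ⟨?_, ?_⟩,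
    ?_, ?_, ?_⟩
  · exact connected_induce_union (connected_induce_singleton G v).preconnected
      ((hP.connected w hw').mono (comap_monotone _ hle)).preconnected rfl (hP.mem w hw') hvw
  · exact fun hvu => hu.2 (hP.inter_subset u (hsub hu) ⟨hvu, Or.inr hvX⟩).symm
  · exact hP.disjoint hw' (hsub hu) fun hwu => hw (hwu ▸ hu.1.1)
  · exact hinsert ▸ forall_mem_insert_update (p := fun u S => u ∈ S) hv (mem_insert _ _)
      fun u hu => hP.mem u (hsub hu)
  · refine hinsert ▸ forall_mem_insert_update (p := fun u S => S ∩ X ⊆ {u}) hv ?_ fun u hu y hy =>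
      hP.inter_subset u (hsub hu) ⟨hy.1, Or.inr hy.2⟩
    rintro y ⟨rfl | hy, hyX⟩
    · rfl
    · exact absurd (hP.inter_subset w hw' ⟨hy, Or.inr hyX⟩ ▸ hyX) hw
  · exact hinsert ▸ forall_mem_insert_update
      (p := fun _ S => (S ∩ innerBoundary G Y).Nonempty) hv
      (hmeets (subset_insert _ _) (hP.meets w hw')) fun u hu => hmeets subset_rfl
        (hP.meets u (hsub hu))

end Linkage

section Menger

variable {V : Type*} [Finite V] {G : SimpleGraph V} {X Y : Set V} {v w : V}

/-- No set between `X` and `Y` has a smaller inner boundary than `X`, which is the hypothesis of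
Menger's theorem for the inner boundaries of `X` and `Y`. -/
def IsBoundaryMinimal (G : SimpleGraph V) (X Y : Set V) : Prop :=
  ∀ Z, X ⊆ Z → Z ⊆ Y → (innerBoundary G X).ncard ≤ (innerBoundary G Z).ncard

theorem ncard_innerBoundary_le_deleteIncidenceSet {Z : Set V}
    (hlt : ∀ Z, X ⊂ Z → Z ⊂ Y → (innerBoundary G X).ncard < (innerBoundary G Z).ncard)
    (hle : (innerBoundary G X).ncard ≤ (innerBoundary G Y).ncard) (hvX : v ∈ X)
    (hvY : v ∉ innerBoundary G Y) (hXZ : X ⊂ Z) (hZY : Z ⊆ Y) :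
    (innerBoundary G X).ncard ≤ (innerBoundary (G.deleteIncidenceSet v) Z).ncard := by
  rw [innerBoundary_deleteIncidenceSet (hXZ.subset hvX)]
  obtain rfl | hZY := hZY.eq_or_ssubset
  · rwa [sdiff_singleton_eq_self hvY]
  · have := ncard_le_ncard_sdiff_add_ncard (innerBoundary G Z) {v}
    rw [ncard_singleton] at this
    have := hlt Z hXZ hZY
    lia

theorem innerBoundary_deleteIncidenceSet_insert (hv : v ∈ innerBoundary G X) (hw : w ∉ X)
    (hle : (innerBoundary G X).ncard ≤
      (innerBoundary (G.deleteIncidenceSet v) (insert w X)).ncard) :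
    innerBoundary (G.deleteIncidenceSet v) (insert w X) = insert w (innerBoundary G X \ {v}) := by
  refine eq_of_subset_of_ncard_le ?_ ?_
  · rw [innerBoundary_deleteIncidenceSet (mem_insert_of_mem w hv.1),
      insert_sdiff_singleton_comm (ne_of_mem_of_not_mem hv.1 hw).symm]
    exact sdiff_subset_sdiff_left (innerBoundary_insert_subset G w X)
  · rwa [ncard_insert_of_notMem fun h => hw h.1.1, ncard_sdiff_singleton_add_one hv]

theorem ncard_sdiff_lt_ncard_sdiff {Z : Set V} (hXZ : X ⊂ Z) (hZY : Z ⊆ Y) :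
    (Y \ Z).ncard < (Y \ X).ncard := by
  obtain ⟨z, hzZ, hzX⟩ := exists_of_ssubset hXZ
  exact ncard_lt_ncard (ssubset_iff_exists.mpr
    ⟨sdiff_subset_sdiff_right hXZ.subset, z, ⟨hZY hzZ, hzX⟩, fun h => h.2 hzZ⟩)

/-- **Menger's theorem**, for inner boundaries. -/
theorem exists_isLinkage (hXY : X ⊆ Y) (hmin : IsBoundaryMinimal G X Y) :
    ∃ P, IsLinkage G X Y P := by
  classical
  induction hn : (Y \ X).ncard using Nat.strong_induction_on generalizing G X Y with
  | _ n ih =>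
  subst hn
  by_cases hsub : innerBoundary G X ⊆ innerBoundary G Y
  · exact ⟨_, isLinkage_singleton hXY hsub⟩
  by_cases hmid : ∃ Z, X ⊂ Z ∧ Z ⊂ Y ∧ (innerBoundary G Z).ncard ≤ (innerBoundary G X).ncard
  · obtain ⟨Z, hXZ, hZY, hZ⟩ := hmid
    obtain ⟨P, hP⟩ := ih _ (ncard_lt_ncard (sdiff_lt_sdiff_right hZY hXZ.subset)) hXZ.subset
      (fun W hXW hWZ => hmin W hXW (hWZ.trans hZY.subset)) rfl
    obtain ⟨Q, hQ⟩ := ih _ (ncard_sdiff_lt_ncard_sdiff hXZ hZY.subset) hZY.subset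
      (fun W hZW hWY => hZ.trans (hmin W (hXZ.subset.trans hZW) hWY)) rfl
    exact ⟨_, hP.trans hQ hXZ.subset hZY.subset⟩
  push Not at hmid
  obtain ⟨v, hv, hvY⟩ := not_subset.mp hsub
  obtain ⟨hvX, w, hwX, hvw⟩ := id hv
  have hwY : w ∈ Y := by_contra fun hwY => hvY ⟨hXY hvX, w, hwY, hvw⟩
  have hX' : insert w X ⊆ Y := insert_subset hwY hXY
  have hle {Z : Set V} (hZ : insert w X ⊆ Z) :=
    ncard_innerBoundary_le_deleteIncidenceSet hmid (hmin Y hXY subset_rfl) hvX hvY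
      ((ssubset_insert hwX).trans_subset hZ)
  have hboundary := innerBoundary_deleteIncidenceSet_insert hv hwX (hle subset_rfl hX')
  obtain ⟨P, hP⟩ := ih _ (ncard_sdiff_lt_ncard_sdiff (ssubset_insert hwX) hX') hX'
    (G := G.deleteIncidenceSet v) (fun Z hXZ hZY => by
      rw [hboundary, ncard_insert_of_notMem fun h => hwX h.1.1, ncard_sdiff_singleton_add_one hv]
      exact hle hXZ hZY) rfl
  exact ⟨_, hP.of_deleteIncidenceSet hvX (hXY hvX) hwX hvw hboundary⟩

end Menger

section Buildable

variable {V : Type*} {G : SimpleGraph V} {N : ℕ} {A X Y Z : Set V}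

/-- The vertex sets that can be reached from `∅` by adding one vertex at a time while the inner
boundary keeps fewer than `N` vertices. -/
inductive IsBuildable (G : SimpleGraph V) (N : ℕ) : Set V → Prop
  | empty : IsBuildable G N ∅
  | insertVertex {A : Set V} (v : V) (hA : IsBuildable G N A)
      (hcard : (innerBoundary G (insert v A)).ncard < N) : IsBuildable G N (insert v A)

theorem IsBuildable.exists_critical_insert {p : Set V → Prop} (hX : IsBuildable G N X) (h₀ : p ∅)
    (hpX : ¬p X) :
    ∃ A v, p A ∧ ¬p (insert v A) ∧ (innerBoundary G (insert v A)).ncard < N := by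
  induction hX with
  | empty => exact absurd h₀ hpX
  | @insertVertex A v _ hcard ih =>
    by_cases hpA : p A
    · exact ⟨A, v, hpA, hpX, hcard⟩
    · exact ih hpA

variable [Finite V]

theorem IsBuildable.inter (hA : IsBuildable G N A) (hAY : A ⊆ Y) (hZY : Z ⊆ Y)
    (hZ : IsBoundaryMinimal G Z Y) : IsBuildable G N (A ∩ Z) := by
  induction hA with
  | empty => exact (empty_inter Z).symm ▸ .empty
  | @insertVertex A v _ hcard ih =>
    have ihA := ih ((subset_insert v A).trans hAY)
    by_cases hv : v ∈ Z
    · rw [insert_inter_of_mem hv]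
      refine ihA.insertVertex v ?_
      have hunion := hZ (insert v A ∪ Z) subset_union_right (union_subset hAY hZY)
      have hsubmod := ncard_innerBoundary_inter_add_union_le G (insert v A) Z
      rw [insert_inter_of_mem hv] at hsubmod
      lia
    · rwa [insert_inter_of_notMem hv]

theorem IsBuildable.isBoundaryMinimal (hY : IsBuildable G N Y) (hXY : X ⊆ Y)
    (hX : ∀ Z, IsBuildable G N Z → X ⊆ Z → (innerBoundary G X).ncard ≤ (innerBoundary G Z).ncard) :
    IsBoundaryMinimal G X Y := by
  obtain ⟨Z, ⟨hXZ, hZY⟩, hmin⟩ := exists_min_image {Z | X ⊆ Z ∧ Z ⊆ Y}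
    (fun Z => (innerBoundary G Z).ncard) (toFinite _) ⟨X, subset_rfl, hXY⟩
  have hZ : IsBuildable G N Z := by
    rw [← inter_eq_self_of_subset_right hZY]
    exact hY.inter subset_rfl hZY fun W hZW hWY => hmin W ⟨hXZ.trans hZW, hWY⟩
  exact fun W hXW hWY => (hX Z hZ hXZ).trans (hmin W ⟨hXW, hWY⟩)

end Buildable

section ForestModel

variable {V ι : Type*} {G : SimpleGraph V} {H : SimpleGraph ι} {N : ℕ} {I : Set ι} {X Y : Set V}
  {f : ι → Set V} {P : V → Set V} {w : ι} {x : V}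

/-- Every nonempty finite set of vertices of `H` has a vertex with at most one neighbour in that
set; equivalently, `H` is a forest. -/
def IsOneDegenerate (H : SimpleGraph ι) : Prop :=
  ∀ J : Finset ι, J.Nonempty → ∃ w ∈ J, {a | a ∈ J ∧ H.Adj w a}.Subsingleton

/-- The sets `f a` with `a ∈ I` are the branch sets of a minor model inside `X` of the subgraph of
`H` induced on `I`. -/
structure IsModelOn (G : SimpleGraph V) (H : SimpleGraph ι) (I : Set ι) (X : Set V)
    (f : ι → Set V) : Prop extends IsBranchFamily G I X f where
  adj : ∀ a ∈ I, ∀ b ∈ I, H.Adj a b → ∃ x ∈ f a, ∃ y ∈ f b, G.Adj x y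

/-- A minor model inside `X` all of whose branch sets reach the inner boundary of `X`, so that it
can be extended beyond `X`. -/
structure IsRootedModelOn (G : SimpleGraph V) (H : SimpleGraph ι) (I : Set ι) (X : Set V)
    (f : ι → Set V) : Prop extends IsModelOn G H I X f where
  meets : ∀ a ∈ I, (f a ∩ innerBoundary G X).Nonempty

theorem isRootedModelOn_empty (X : Set V) (f : ι → Set V) : IsRootedModelOn G H ∅ X f :=
  ⟨⟨⟨by simp, by simp, pairwiseDisjoint_empty⟩, by simp⟩, by simp⟩

theorem IsRootedModelOn.prolong (hf : IsRootedModelOn G H I X f) (hP : IsLinkage G X Y P)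
    (hXY : X ⊆ Y) : IsRootedModelOn G H I Y fun a => prolong G X P (f a) where
  toIsBranchFamily := hf.toIsBranchFamily.prolong hP hXY
  adj a ha b hb hab := by
    obtain ⟨x, hx, y, hy, hxy⟩ := hf.adj a ha b hb hab
    exact ⟨x, subset_prolong _ hx, y, subset_prolong _ hy, hxy⟩
  meets a ha := prolong_meets hP (hf.meets a ha)

theorem IsRootedModelOn.insert_update [DecidableEq ι] (hf : IsRootedModelOn G H I X f) (hw : w ∉ I)
    (hx : x ∉ X) (hboundary : innerBoundary G (insert x X) = insert x (innerBoundary G X))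
    (hadj : ∀ a ∈ I, H.Adj w a → ∃ y ∈ f a, G.Adj x y) :
    IsRootedModelOn G H (insert w I) (insert x X) (Function.update f w {x}) where
  toIsBranchFamily := (hf.toIsBranchFamily.mono_right (subset_insert x X)).insert_update hw
    (singleton_subset_iff.mpr (mem_insert x X)) (connected_induce_singleton G x)
    fun a ha => disjoint_singleton_left.mpr fun hxa => hx (hf.subset a ha hxa)
  adj := by
    refine forall_mem_insert_update (p := fun a S => ∀ b ∈ insert w I, H.Adj a b →
      ∃ y ∈ S, ∃ z ∈ Function.update f w {x} b, G.Adj y z) hw ?_ fun a ha => ?_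
    · refine forall_mem_insert_update (p := fun b T => H.Adj w b → ∃ y ∈ ({x} : Set V), ∃ z ∈ T,
        G.Adj y z) hw (fun h => absurd h H.irrefl) fun b hb hwb => ⟨x, rfl, hadj b hb hwb⟩
    · refine forall_mem_insert_update (p := fun b T => H.Adj a b → ∃ y ∈ f a, ∃ z ∈ T, G.Adj y z)
        hw (fun haw => ?_) (hf.adj a ha)
      obtain ⟨y, hy, hxy⟩ := hadj a ha haw.symm
      exact ⟨y, hy, x, rfl, hxy.symm⟩
  meets := hboundary ▸ forall_mem_insert_update
    (p := fun _ S => (S ∩ insert x (innerBoundary G X)).Nonempty) hw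
    ⟨x, rfl, mem_insert _ _⟩
    fun a ha => (hf.meets a ha).mono (inter_subset_inter_right _ (subset_insert _ _))

theorem IsRootedModelOn.exists_notMem_forall_adj (hf : IsRootedModelOn G H I X f)
    (hX : X ≠ univ) (hw : {a | a ∈ I ∧ H.Adj w a}.Subsingleton) :
    ∃ x ∉ X, ∀ a ∈ I, H.Adj w a → ∃ y ∈ f a, G.Adj x y := by
  obtain hempty | ⟨b, hb⟩ := hw.eq_empty_or_singleton
  · obtain ⟨x, hx⟩ := (ne_univ_iff_exists_notMem X).mp hX
    exact ⟨x, hx, fun a ha hwa => absurd ⟨ha, hwa⟩ (eq_empty_iff_forall_notMem.mp hempty a)⟩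
  · obtain ⟨hbI, hwb⟩ : b ∈ {a | a ∈ I ∧ H.Adj w a} := hb ▸ rfl
    obtain ⟨y, hyb, -, x, hx, hyx⟩ := hf.meets b hbI
    refine ⟨x, hx, fun a ha hwa => ⟨y, ?_, hyx.symm⟩⟩
    rwa [hw ⟨ha, hwa⟩ ⟨hbI, hwb⟩]

variable [Finite V]

/-- The buildable sets that are maximal among those with at most `m` inner boundary vertices. -/
def IsSaturated (G : SimpleGraph V) (N m : ℕ) : Set V → Prop :=
  Maximal fun Z => IsBuildable G N Z ∧ (innerBoundary G Z).ncard ≤ m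

theorem IsSaturated.exists_insert {m : ℕ} (hX : IsSaturated G N m X) (hx : x ∉ X) (hm : m + 1 < N) :
    innerBoundary G (insert x X) = insert x (innerBoundary G X) ∧
      ∃ Y, IsSaturated G N (m + 1) Y ∧ insert x X ⊆ Y ∧
        IsBoundaryMinimal G (insert x X) Y := by
  have hgt {Z : Set V} (hZ : IsBuildable G N Z) (hXZ : insert x X ⊆ Z) :
      m + 1 ≤ (innerBoundary G Z).ncard := by
    by_contra! hlt
    exact hx (hX.le_of_ge ⟨hZ, Nat.le_of_lt_succ hlt⟩ ((subset_insert x X).trans hXZ)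
      (hXZ (mem_insert x X)))
  have hle : (insert x (innerBoundary G X)).ncard ≤ m + 1 :=
    (ncard_insert_le _ _).trans (Nat.succ_le_succ hX.prop.2)
  have hsub := innerBoundary_insert_subset G x X
  have hcard := (ncard_le_ncard hsub).trans hle
  have hbuild := hX.prop.1.insertVertex x (hcard.trans_lt hm)
  obtain ⟨Y, hXY, hY⟩ := (toFinite {Z | IsBuildable G N Z ∧
    (innerBoundary G Z).ncard ≤ m + 1}).exists_le_maximal ⟨hbuild, hcard⟩
  exact ⟨eq_of_subset_of_ncard_le hsub (hle.trans (hgt hbuild subset_rfl)), Y, hY, hXY,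
    hY.prop.1.isBoundaryMinimal hXY fun Z hZ hXZ => hcard.trans (hgt hZ hXZ)⟩

theorem exists_isRootedModelOn (hH : IsOneDegenerate H) (hG : ¬IsBuildable G N univ)
    (J : Finset ι) (hJ : J.card < N) :
    ∃ X f, IsSaturated G N J.card X ∧ IsRootedModelOn G H J X f := by
  classical
  induction J using Finset.strongInduction with
  | H J ih =>
  obtain rfl | hne := J.eq_empty_or_nonempty
  · obtain ⟨X, -, hX⟩ := (toFinite {Z | IsBuildable G N Z ∧
      (innerBoundary G Z).ncard ≤ 0}).exists_le_maximal ⟨.empty, by simp [innerBoundary_empty]⟩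
    rw [Finset.coe_empty]
    exact ⟨X, fun _ => ∅, hX, isRootedModelOn_empty X _⟩
  obtain ⟨w, hwJ, hw⟩ := hH J hne
  have hcard := J.card_erase_add_one hwJ
  obtain ⟨X, f, hX, hf⟩ := ih (J.erase w) (J.erase_ssubset hwJ) (by lia)
  obtain ⟨x, hxX, hadj⟩ := hf.exists_notMem_forall_adj (fun h => hG (h ▸ hX.prop.1))
    (hw.anti fun a ha => ⟨Finset.mem_of_mem_erase ha.1, ha.2⟩)
  obtain ⟨hboundary, Y, hY, hXY, hmin⟩ := hX.exists_insert hxX (by lia)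
  obtain ⟨P, hP⟩ := exists_isLinkage hXY hmin
  have hmodel := (hf.insert_update (by simp) hxX hboundary hadj).prolong hP hXY
  rw [← Finset.coe_insert, Finset.insert_erase hwJ] at hmodel
  exact ⟨Y, _, hcard ▸ hY, hmodel⟩

end ForestModel

section PathDecomposition

variable {V W : Type*} {G : SimpleGraph V} {G' : SimpleGraph W} {A A' U : Set V} {p q t : ℕ}
  {B : Fin p → Set V} {C : Fin q → Set V}

theorem isPathDecompOn_self (G : SimpleGraph V) (A : Set V) : IsPathDecompOn G A 1 fun _ => A :=
  ⟨fun _ => subset_rfl, fun _ hv => ⟨0, hv⟩, fun _ _ _ hu hv => ⟨0, hu, hv⟩,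
    fun _ _ _ _ _ _ hv _ => hv⟩

theorem IsPathDecompOn.inter (hB : IsPathDecompOn G A p B) (hU : U ⊆ A) :
    IsPathDecompOn G U p fun i => B i ∩ U := by
  obtain ⟨-, hcover, hedge, hconvex⟩ := hB
  refine ⟨fun i => inter_subset_right, fun v hv => ?_, fun u v huv hu hv => ?_,
    fun v i j l hij hjl hi hl => ⟨hconvex v i j l hij hjl hi.1 hl.1, hi.2⟩⟩
  · obtain ⟨i, hi⟩ := hcover v (hU hv)
    exact ⟨i, hi, hv⟩
  · obtain ⟨i, hui, hvi⟩ := hedge huv (hU hu) (hU hv)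
    exact ⟨i, ⟨hui, hu⟩, hvi, hv⟩

theorem IsPathDecompOn.append (hB : IsPathDecompOn G A p B) (hC : IsPathDecompOn G A' q C)
    (hdisj : Disjoint A A') (hadj : ∀ x ∈ A, ∀ y ∈ A', ¬G.Adj x y) :
    IsPathDecompOn G (A ∪ A') (p + q) (Fin.append B C) := by
  obtain ⟨hB, hBcover, hBedge, hBconvex⟩ := hB
  obtain ⟨hC, hCcover, hCedge, hCconvex⟩ := hC
  have left {i v} (h : v ∈ B i) : v ∈ Fin.append B C (i.castAdd q) := by rwa [Fin.append_left]
  have right {i v} (h : v ∈ C i) : v ∈ Fin.append B C (i.natAdd p) := by rwa [Fin.append_right]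
  refine ⟨fun i => ?_, ?_, ?_, fun v i j l hij hjl => ?_⟩
  · induction i using Fin.addCases with
    | left i => exact (Fin.append_left B C i).symm ▸ (hB i).trans subset_union_left
    | right i => exact (Fin.append_right B C i).symm ▸ (hC i).trans subset_union_right
  · rintro v (hv | hv)
    · exact (hBcover v hv).imp' _ fun _ => left
    · exact (hCcover v hv).imp' _ fun _ => right
  · rintro u v huv (hu | hu) (hv | hv)
    · exact (hBedge huv hu hv).imp' _ fun _ => And.imp left left
    · exact absurd huv (hadj u hu v hv)
    · exact absurd huv.symm (hadj v hv u hu)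
    · exact (hCedge huv hu hv).imp' _ fun _ => And.imp right right
  · have hnot {a b} (ha : v ∈ B a) (hb : v ∈ C b) : False :=
      Set.disjoint_left.mp hdisj (hB a ha) (hC b hb)
    induction i using Fin.addCases <;> induction j using Fin.addCases <;>
      induction l using Fin.addCases <;>
      simp only [Fin.append_left, Fin.append_right, Fin.le_def, Fin.val_castAdd,
        Fin.val_natAdd] at hij hjl ⊢
    case left.left.left i j l => exact hBconvex v i j l hij hjl
    case right.right.right i j l => exact hCconvex v i j l (by lia) (by lia)
    all_goals first | lia | exact fun hi hl => (hnot hi hl).elim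

theorem IsPathDecompOn.image (e : G ↪g G') (hB : IsPathDecompOn G A p B) :
    IsPathDecompOn G' (e '' A) p fun i => e '' B i := by
  obtain ⟨hsub, hcover, hedge, hconvex⟩ := hB
  refine ⟨fun i => image_mono (hsub i), forall_mem_image.mpr fun v hv => ?_, ?_, ?_⟩
  · exact (hcover v hv).imp fun _ => mem_image_of_mem e
  · rintro _ _ huv ⟨u, hu, rfl⟩ ⟨v, hv, rfl⟩
    exact (hedge (e.map_adj_iff.mp huv) hu hv).imp fun _ =>
      And.imp (mem_image_of_mem e) (mem_image_of_mem e)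
  · rintro _ i j l hij hjl ⟨v, hi, rfl⟩ hl
    exact mem_image_of_mem e (hconvex v i j l hij hjl hi (e.injective.mem_set_image.mp hl))

theorem IsPathDecompOn.preimage (e : G' ↪g G) (hB : IsPathDecompOn G A p B) :
    IsPathDecompOn G' (e ⁻¹' A) p fun i => e ⁻¹' B i := by
  obtain ⟨hsub, hcover, hedge, hconvex⟩ := hB
  exact ⟨fun i => preimage_mono (hsub i), fun v hv => hcover (e v) hv,
    fun u v huv hu hv => hedge (e.map_adj_iff.mpr huv) hu hv, fun v => hconvex (e v)⟩

/-- The part of `G` inside the vertex set `U` has a path decomposition of width at most `t`. -/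
def PathwidthOnLE (G : SimpleGraph V) (U : Set V) (t : ℕ) : Prop :=
  ∃ p, ∃ B : Fin p → Set V, IsPathDecompOn G U p B ∧ ∀ i, (B i).ncard ≤ t + 1

theorem pathwidthOnLE_empty (G : SimpleGraph V) (t : ℕ) : PathwidthOnLE G ∅ t :=
  ⟨1, _, isPathDecompOn_self G ∅, fun _ => ncard_empty V |>.trans_le (Nat.zero_le _)⟩

theorem PathwidthOnLE.mono [Finite V] (hA : PathwidthOnLE G A t) (hU : U ⊆ A) :
    PathwidthOnLE G U t := by
  obtain ⟨p, B, hB, hcard⟩ := hA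
  exact ⟨p, _, hB.inter hU, fun i => (ncard_le_ncard inter_subset_left).trans (hcard i)⟩

theorem PathwidthOnLE.union (hA : PathwidthOnLE G A t) (hA' : PathwidthOnLE G A' t)
    (hdisj : Disjoint A A') (hadj : ∀ x ∈ A, ∀ y ∈ A', ¬G.Adj x y) :
    PathwidthOnLE G (A ∪ A') t := by
  obtain ⟨p, B, hB, hBcard⟩ := hA
  obtain ⟨q, C, hC, hCcard⟩ := hA'
  refine ⟨p + q, _, hB.append hC hdisj hadj, Fin.addCases (fun i => ?_) fun i => ?_⟩
  · rw [Fin.append_left]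
    exact hBcard i
  · rw [Fin.append_right]
    exact hCcard i

theorem pathwidthOnLE_image_iff (e : G ↪g G') :
    PathwidthOnLE G' (e '' A) t ↔ PathwidthOnLE G A t := by
  constructor
  · rintro ⟨p, B, hB, hcard⟩
    refine ⟨p, _, preimage_image_eq A e.injective ▸ hB.preimage e, fun i => ?_⟩
    rw [ncard_preimage_of_injective_subset_range e.injective
      ((hB.1 i).trans (image_subset_range e A))]
    exact hcard i
  · rintro ⟨p, B, hB, hcard⟩
    exact ⟨p, _, hB.image e, fun i => (ncard_image_of_injective _ e.injective).trans_le (hcard i)⟩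

theorem pathwidth_le_iff : pathwidth G ≤ t ↔ PathwidthOnLE G univ t := by
  refine ⟨fun h => ?_, fun h => Nat.sInf_le h⟩
  obtain ⟨p, B, hB, hcard⟩ := Nat.sInf_mem (s := {t | PathwidthOnLE G univ t})
    ⟨Nat.card V, 1, _, isPathDecompOn_self G univ, fun _ => (ncard_univ V).trans_le (Nat.le_succ _)⟩
  exact ⟨p, B, hB, fun i => (hcard i).trans (Nat.succ_le_succ h)⟩

theorem pathwidth_induce_le_iff : pathwidth (G.induce U) ≤ t ↔ PathwidthOnLE G U t := by
  rw [pathwidth_le_iff, ← pathwidthOnLE_image_iff (Embedding.induce U), image_univ]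
  exact Iff.of_eq (congrArg (PathwidthOnLE G · t) Subtype.range_coe)

end PathDecomposition

section TernaryTree

variable {V α : Type*} {G : SimpleGraph V} {A R S X : Set V} {p h n s t : ℕ} {B : Fin p → Set V}

theorem IsPathDecompOn.inter_bag_nonempty (hB : IsPathDecompOn G A p B) (hS : S ⊆ A)
    (hconn : (G.induce S).Connected) {i j l : Fin p} (hij : i ≤ j) (hjl : j ≤ l)
    (hi : (B i ∩ S).Nonempty) (hl : (B l ∩ S).Nonempty) : (B j ∩ S).Nonempty := by
  obtain ⟨-, -, hedge, hconvex⟩ := hB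
  by_contra hj
  have hjS {v : V} (hvS : v ∈ S) : v ∉ B j := fun hvj => hj ⟨v, hvj, hvS⟩
  obtain ⟨a, hai, haS⟩ := hi
  obtain ⟨c, hcl, hcS⟩ := hl
  have hij : i < j := hij.lt_of_ne fun hij => hjS haS (hij ▸ hai)
  let E : Set V := {v | ∃ m < j, v ∈ B m}
  have ha : a ∈ E := ⟨i, hij, hai⟩
  have hc : c ∉ E := by
    rintro ⟨m, hmj, hm⟩
    exact hjS hcS (hconvex c m j l hmj.le hjl hm hcl)
  obtain ⟨x, ⟨hxS, m, hmj, hxm⟩, y, ⟨hyS, hy⟩, hxy⟩ :=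
    exists_adj_of_connected_induce hconn ⟨a, haS, ha⟩ ⟨c, hcS, hc⟩
  obtain ⟨k, hxk, hyk⟩ := hedge hxy (hS hxS) (hS hyS)
  exact hjS hxS (hconvex x m j k hmj.le (not_lt.mp fun hkj => hy ⟨k, hkj, hyk⟩) hxm hxk)

theorem IsPathDecompOn.lt_ncard_middle_bag_inter [Finite V] (hB : IsPathDecompOn G A p B)
    {S : Fin 3 → Set V} (hA : R ∪ ⋃ i, S i ⊆ A) (hR : R.Nonempty)
    (hRS : ∀ i, (G.induce (R ∪ S i)).Connected) (hdisj : Pairwise fun i j => Disjoint (S i) (S j))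
    (hdisjR : ∀ i, Disjoint R (S i)) {b : Fin 3 → Fin p} (hb : Monotone b)
    (hcard : ∀ i, n < (B (b i) ∩ S i).ncard) :
    n + 1 < (B (b 1) ∩ (R ∪ ⋃ i, S i)).ncard := by
  have hne (i : Fin 3) : (B (b i) ∩ S i).Nonempty :=
    nonempty_of_ncard_ne_zero (Nat.ne_zero_of_lt (hcard i))
  have hsub (i : Fin 3) : R ∪ S i ⊆ R ∪ ⋃ i, S i :=
    union_subset_union_right R (subset_iUnion S i)
  have houter : (G.induce ((R ∪ S 0) ∪ (R ∪ S 2))).Connected :=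
    induce_union_connected (hRS 0).preconnected (hRS 2).preconnected
      (hR.mono (subset_inter subset_union_left subset_union_left))
  have houter_sub : (R ∪ S 0) ∪ (R ∪ S 2) ⊆ R ∪ ⋃ i, S i := union_subset (hsub 0) (hsub 2)
  obtain ⟨x, hxb, hx⟩ := hB.inter_bag_nonempty (houter_sub.trans hA) houter
    (hb (show (0 : Fin 3) ≤ 1 by decide)) (hb (show (1 : Fin 3) ≤ 2 by decide))
    ((hne 0).mono (inter_subset_inter_right _ (subset_union_right.trans subset_union_left)))
    ((hne 2).mono (inter_subset_inter_right _ (subset_union_right.trans subset_union_right)))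
  have hx' : x ∉ S 1 := by
    have hmiddle : Disjoint ((R ∪ S 0) ∪ (R ∪ S 2)) (S 1) := by
      simp only [disjoint_union_left, hdisjR, true_and]
      exact ⟨hdisj (by decide), hdisj (by decide)⟩
    exact Set.disjoint_left.mp hmiddle hx
  calc n + 1 < (B (b 1) ∩ S 1).ncard + 1 := Nat.succ_lt_succ (hcard 1)
    _ = (insert x (B (b 1) ∩ S 1)).ncard := (ncard_insert_of_notMem fun h => hx' h.2).symm
    _ ≤ (B (b 1) ∩ (R ∪ ⋃ i, S i)).ncard := ncard_le_ncard <|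
      insert_subset ⟨hxb, houter_sub hx⟩
        (inter_subset_inter_right _ (subset_union_right.trans (hsub 1)))

theorem IsPathDecompOn.exists_lt_ncard_bag_inter [Finite V] (hB : IsPathDecompOn G A p B)
    {S : Fin 3 → Set V} (hA : R ∪ ⋃ i, S i ⊆ A) (hR : R.Nonempty)
    (hRS : ∀ i, (G.induce (R ∪ S i)).Connected) (hdisj : Pairwise fun i j => Disjoint (S i) (S j))
    (hdisjR : ∀ i, Disjoint R (S i)) (hcard : ∀ i, ∃ b, n < (B b ∩ S i).ncard) :
    ∃ b, n + 1 < (B b ∩ (R ∪ ⋃ i, S i)).ncard := by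
  choose b hb using hcard
  have hunion : ⋃ i, S (Tuple.sort b i) = ⋃ i, S i := (Tuple.sort b).iSup_comp
  have hmiddle := hB.lt_ncard_middle_bag_inter (S := fun i => S (Tuple.sort b i)) (hunion ▸ hA) hR
    (fun i => hRS _) (fun i j hij => hdisj ((Tuple.sort b).injective.ne hij)) (fun i => hdisjR _)
    (Tuple.monotone_sort b) fun i => hb _
  exact ⟨_, hunion ▸ hmiddle⟩

/-- The infinite rooted tree on the words over `α`, in which the children of `l` are the words
`a :: l`. -/
def wordTree (α : Type*) : SimpleGraph (List α) :=
  .fromRel fun l m => ∃ a, m = a :: l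

theorem wordTree_adj_cons (a : α) (l : List α) : (wordTree α).Adj l (a :: l) :=
  ⟨(List.cons_ne_self a l).symm, Or.inl ⟨a, rfl⟩⟩

theorem isOneDegenerate_wordTree (α : Type*) : IsOneDegenerate (wordTree α) := by
  intro J hJ
  obtain ⟨w, hwJ, hmax⟩ := J.exists_max_image List.length hJ
  have hparent {m : List α} (hm : m ∈ {m | m ∈ J ∧ (wordTree α).Adj w m}) : m = w.tail := by
    obtain ⟨hmJ, -, ⟨a, rfl⟩ | ⟨a, rfl⟩⟩ := hm
    · exact absurd (hmax _ hmJ) (by simp)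
    · rfl
  exact ⟨w, hwJ, fun m hm m' hm' => (hparent hm).trans (hparent hm').symm⟩

/-- The words of length at most `h` over three letters, i.e. the vertices of the complete ternary
tree of height `h`. -/
def ternaryWords : ℕ → Finset (List (Fin 3))
  | 0 => {[]}
  | h + 1 => insert [] (Finset.image₂ List.cons Finset.univ (ternaryWords h))

theorem mem_ternaryWords {l : List (Fin 3)} : l ∈ ternaryWords h ↔ l.length ≤ h := by
  induction h generalizing l with
  | zero => simp [ternaryWords]
  | succ h ih => cases l <;> simp [ternaryWords, ih]

theorem card_ternaryWords_lt (h : ℕ) : (ternaryWords h).card < 3 ^ (h + 1) := by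
  suffices 2 * (ternaryWords h).card + 1 ≤ 3 ^ (h + 1) by lia
  induction h with
  | zero => simp [ternaryWords]
  | succ h ih =>
    have hinsert := Finset.card_insert_le []
      (Finset.image₂ List.cons Finset.univ (ternaryWords h))
    have himage := Finset.card_image₂_le List.cons (Finset.univ : Finset (Fin 3)) (ternaryWords h)
    rw [Finset.card_univ, Fintype.card_fin] at himage
    rw [ternaryWords, pow_succ]
    lia

/-- The union of the sets `f m` over the words `m` in the first `s` levels of the subtree of
`wordTree α` rooted at `l`. -/
def subtreeUnion (f : List α → Set V) : ℕ → List α → Set V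
  | 0, l => f l
  | s + 1, l => f l ∪ ⋃ a, subtreeUnion f s (a :: l)

theorem subset_subtreeUnion (f : List α → Set V) (s : ℕ) (l : List α) :
    f l ⊆ subtreeUnion f s l := by
  cases s with
  | zero => exact subset_rfl
  | succ s => exact subset_union_left

theorem exists_mem_of_mem_subtreeUnion {f : List α → Set V} {l : List α} {x : V}
    (hx : x ∈ subtreeUnion f s l) : ∃ m, l <:+ m ∧ m.length ≤ l.length + s ∧ x ∈ f m := by
  induction s generalizing l with
  | zero => exact ⟨l, List.suffix_rfl, le_rfl, hx⟩
  | succ s ih =>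
    obtain hx | hx := hx
    · exact ⟨l, List.suffix_rfl, Nat.le_add_right _ _, hx⟩
    · obtain ⟨a, hx⟩ := mem_iUnion.mp hx
      obtain ⟨m, hlm, hm, hxm⟩ := ih hx
      exact ⟨m, (List.suffix_cons a l).trans hlm, by rw [List.length_cons] at hm; lia, hxm⟩

section Model

variable {f : List α → Set V} {l : List α}

theorem subtreeUnion_subset (hf : IsModelOn G (wordTree α) {l | l.length ≤ h} X f)
    (hl : l.length + s ≤ h) : subtreeUnion f s l ⊆ X := by
  intro x hx
  obtain ⟨m, -, hm, hxm⟩ := exists_mem_of_mem_subtreeUnion hx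
  exact hf.subset m (hm.trans hl) hxm

theorem connected_union_subtreeUnion_cons
    (hf : IsModelOn G (wordTree α) {l | l.length ≤ h} X f) {a : α} (hl : l.length < h)
    (hconn : (G.induce (subtreeUnion f s (a :: l))).Connected) :
    (G.induce (f l ∪ subtreeUnion f s (a :: l))).Connected := by
  obtain ⟨x, hx, y, hy, hxy⟩ := hf.adj l hl.le (a :: l) hl (wordTree_adj_cons a l)
  exact connected_induce_union (hf.connected l hl.le).preconnected hconn.preconnected hx
    (subset_subtreeUnion f s (a :: l) hy) hxy

theorem connected_subtreeUnion (hf : IsModelOn G (wordTree α) {l | l.length ≤ h} X f)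
    (hl : l.length + s ≤ h) : (G.induce (subtreeUnion f s l)).Connected := by
  induction s generalizing l with
  | zero => exact hf.connected l hl
  | succ s ih =>
    have hlt : l.length < h := by lia
    exact connected_induce_union_iUnion (hf.connected l hlt.le) fun a =>
      connected_union_subtreeUnion_cons hf hlt (ih (by rw [List.length_cons]; lia))

theorem disjoint_subtreeUnion_cons (hf : IsModelOn G (wordTree α) {l | l.length ≤ h} X f)
    {a b : α} (hab : a ≠ b) (hl : l.length + s < h) :
    Disjoint (subtreeUnion f s (a :: l)) (subtreeUnion f s (b :: l)) := by
  refine Set.disjoint_left.mpr fun x hxa hxb => ?_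
  obtain ⟨m, ham, hm, hxm⟩ := exists_mem_of_mem_subtreeUnion hxa
  obtain ⟨m', hbm', hm', hxm'⟩ := exists_mem_of_mem_subtreeUnion hxb
  rw [List.length_cons] at hm hm'
  have hmh : m.length ≤ h := by lia
  have hmh' : m'.length ≤ h := by lia
  obtain rfl := hf.disjoint.elim_set hmh hmh' x hxm hxm'
  have := (List.suffix_of_suffix_length_le ham hbm' le_rfl).eq_of_length rfl
  exact hab (List.head_eq_of_cons_eq this)

theorem disjoint_subtreeUnion_cons_self (hf : IsModelOn G (wordTree α) {l | l.length ≤ h} X f)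
    {a : α} (hl : l.length + s < h) : Disjoint (f l) (subtreeUnion f s (a :: l)) := by
  refine Set.disjoint_left.mpr fun x hxl hxa => ?_
  obtain ⟨m, ham, hm, hxm⟩ := exists_mem_of_mem_subtreeUnion hxa
  rw [List.length_cons] at hm
  have hlh : l.length ≤ h := by lia
  have hmh : m.length ≤ h := by lia
  obtain rfl := hf.disjoint.elim_set hlh hmh x hxl hxm
  exact absurd ham.length_le (by simp)

end Model

theorem exists_lt_ncard_bag_inter_subtreeUnion [Finite V] {f : List (Fin 3) → Set V}
    (hf : IsModelOn G (wordTree (Fin 3)) {l | l.length ≤ h} X f) (hB : IsPathDecompOn G X p B)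
    {l : List (Fin 3)} (hl : l.length + s ≤ h) :
    ∃ b, s < (B b ∩ subtreeUnion f s l).ncard := by
  induction s generalizing l with
  | zero =>
    obtain ⟨x, hx⟩ := (hf.connected l hl).nonempty
    obtain ⟨b, hxb⟩ := hB.2.1 x (hf.subset l hl hx)
    exact ⟨b, (ncard_pos (toFinite _)).mpr ⟨x, hxb, hx⟩⟩
  | succ s ih =>
    have hlt : l.length < h := by lia
    have hcons (i : Fin 3) : (i :: l).length + s ≤ h := by rw [List.length_cons]; lia
    exact hB.exists_lt_ncard_bag_inter (subtreeUnion_subset hf hl)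
      (nonempty_coe_sort.mp (hf.connected l hlt.le).nonempty)
      (fun i => connected_union_subtreeUnion_cons hf hlt (connected_subtreeUnion hf (hcons i)))
      (fun i j hij => disjoint_subtreeUnion_cons hf hij hl)
      (fun i => disjoint_subtreeUnion_cons_self hf hl) fun i => ih (hcons i)

theorem IsModelOn.not_pathwidthOnLE [Finite V] {f : List (Fin 3) → Set V}
    (hf : IsModelOn G (wordTree (Fin 3)) {l | l.length ≤ t + 1} X f) : ¬PathwidthOnLE G X t := by
  rintro ⟨p, B, hB, hcard⟩
  obtain ⟨b, hb⟩ := exists_lt_ncard_bag_inter_subtreeUnion hf hB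
    (show ([] : List (Fin 3)).length + (t + 1) ≤ t + 1 by simp)
  exact absurd (hcard b) (hb.trans_le (ncard_le_ncard inter_subset_left)).not_ge

end TernaryTree

section Packing

variable {V : Type*} [Finite V] {G : SimpleGraph V} {U : Set V} {t : ℕ}

theorem exists_isBuildable_not_pathwidthOnLE (hG : ¬PathwidthOnLE G univ t) :
    ∃ X, IsBuildable G (3 ^ (t + 2)) X ∧ ¬PathwidthOnLE G X t := by
  by_cases huniv : IsBuildable G (3 ^ (t + 2)) univ
  · exact ⟨univ, huniv, hG⟩
  · obtain ⟨X, f, hX, hf⟩ := exists_isRootedModelOn (isOneDegenerate_wordTree (Fin 3)) huniv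
      (ternaryWords (t + 1)) (card_ternaryWords_lt (t + 1))
    have hwords : (ternaryWords (t + 1) : Set (List (Fin 3))) = {l | l.length ≤ t + 1} :=
      Set.ext fun _ => mem_ternaryWords
    exact ⟨X, hX.prop.1, (hwords ▸ hf.toIsModelOn).not_pathwidthOnLE⟩

theorem exists_critical_separation (hG : ¬PathwidthOnLE G univ t) :
    ∃ X F, F.ncard ≤ 3 ^ (t + 2) ∧ ¬PathwidthOnLE G X t ∧ PathwidthOnLE G (X \ F) t ∧
      ∀ x ∈ X \ F, ∀ y ∉ X, ¬G.Adj x y := by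
  obtain ⟨Y, hY, hYt⟩ := exists_isBuildable_not_pathwidthOnLE hG
  obtain ⟨A, v, hA, hAv, hcard⟩ :=
    hY.exists_critical_insert (p := (PathwidthOnLE G · t)) (pathwidthOnLE_empty G t) hYt
  refine ⟨insert v A, insert v (innerBoundary G (insert v A)), (ncard_insert_le _ _).trans hcard,
    hAv, hA.mono ?_, ?_⟩
  · rintro x ⟨rfl | hx, hxF⟩
    · exact absurd (mem_insert _ _) hxF
    · exact hx
  · exact fun x hx y hy hxy => hx.2 (Or.inr ⟨hx.1, y, hy, hxy⟩)

theorem exists_critical_separation_of_subset (hU : ¬PathwidthOnLE G U t) :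
    ∃ X ⊆ U, ∃ F : Set V, F.ncard ≤ 3 ^ (t + 2) ∧ ¬PathwidthOnLE G X t ∧
      PathwidthOnLE G (X \ F) t ∧ ∀ x ∈ X \ F, ∀ y ∈ U \ X, ¬G.Adj x y := by
  let e : G.induce U ↪g G := Embedding.induce U
  have hrange : e '' univ = U := image_univ.trans Subtype.range_coe
  obtain ⟨X, F, hF, hX, hXF, hadj⟩ := exists_critical_separation (G := G.induce U)
    fun h => hU (hrange ▸ (pathwidthOnLE_image_iff e).mpr h)
  refine ⟨e '' X, (image_mono (subset_univ X)).trans_eq hrange, e '' F, (ncard_image_le).trans hF,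
    (pathwidthOnLE_image_iff e).not.mpr hX, ?_, ?_⟩
  · rw [← image_sdiff e.injective]
    exact (pathwidthOnLE_image_iff e).mpr hXF
  · rw [← image_sdiff e.injective]
    rintro _ ⟨x, hx, rfl⟩ y ⟨hyU, hyX⟩ hxy
    exact hadj x hx ⟨y, hyU⟩ (fun hy => hyX ⟨_, hy, rfl⟩) hxy

theorem exists_packing_or_transversal (G : SimpleGraph V) (U : Set V) (t k : ℕ) :
    (∃ S : Fin k → Set V, (∀ i, S i ⊆ U) ∧ (Pairwise fun i j => Disjoint (S i) (S j)) ∧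
      ∀ i, ¬PathwidthOnLE G (S i) t) ∨
    ∃ F : Set V, F.ncard ≤ 3 ^ (t + 2) * k ∧ PathwidthOnLE G (U \ F) t := by
  induction k generalizing U with
  | zero => exact Or.inl ⟨Fin.elim0, fun i => i.elim0, fun i => i.elim0, fun i => i.elim0⟩
  | succ k ih =>
    by_cases hU : PathwidthOnLE G U t
    · exact Or.inr ⟨∅, by simp, by rwa [sdiff_empty]⟩
    obtain ⟨X, hXU, F, hF, hX, hXF, hadj⟩ := exists_critical_separation_of_subset hU
    obtain ⟨S, hSU, hdisj, hS⟩ | ⟨F', hF', hUF'⟩ := ih (U \ X)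
    · have hXS (i : Fin k) : Disjoint X (S i) := disjoint_sdiff_right.mono_right (hSU i)
      refine Or.inl ⟨Fin.cons X S, Fin.cases hXU fun i => (hSU i).trans sdiff_subset, ?_,
        Fin.cases hX hS⟩
      exact Fin.cases (Fin.cases (absurd rfl) fun j _ => hXS j) fun i =>
        Fin.cases (fun _ => (hXS i).symm) fun j hij => hdisj fun h => hij (congrArg Fin.succ h)
    · refine Or.inr ⟨F ∪ F', ?_, ?_⟩
      · calc (F ∪ F').ncard ≤ F.ncard + F'.ncard := ncard_union_le F F'
          _ ≤ 3 ^ (t + 2) + 3 ^ (t + 2) * k := Nat.add_le_add hF hF'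
          _ = 3 ^ (t + 2) * (k + 1) := by ring
      · refine (hXF.union hUF' ?_ fun x hx y hy => hadj x hx y hy.1).mono ?_
        · exact disjoint_sdiff_right.mono sdiff_subset sdiff_subset
        · rintro x ⟨hxU, hxF⟩
          by_cases hx : x ∈ X
          · exact Or.inl ⟨hx, fun h => hxF (Or.inl h)⟩
          · exact Or.inr ⟨⟨hxU, hx⟩, fun h => hxF (Or.inr h)⟩

end Packing

theorem pathwidth_packing_or_transversal_general {V : Type*} [Finite V] (G : SimpleGraph V)
    (t k : ℕ) :
    (∃ S : Fin k → Set V, (Pairwise fun a b => Disjoint (S a) (S b)) ∧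
      ∀ a, t + 1 ≤ pathwidth (G.induce (S a))) ∨
    (∃ X : Set V, X.ncard ≤ 3 ^ (t + 2) * k ∧ pathwidth (G.induce Xᶜ) ≤ t) := by
  refine (exists_packing_or_transversal G univ t k).imp ?_ ?_
  · rintro ⟨S, -, hdisj, hS⟩
    exact ⟨S, hdisj, fun a => not_le.mp (pathwidth_induce_le_iff.not.mpr (hS a))⟩
  · rintro ⟨X, hX, hXt⟩
    exact ⟨X, hX, pathwidth_induce_le_iff.mpr (compl_eq_univ_sdiff X ▸ hXt)⟩

/-- For every `t` there is a constant `c = c(t)` such that every graph `G` either contains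
`k` vertex-disjoint subgraphs each of pathwidth at least `t + 1`, or has a vertex set `X`
of size at most `c·k` with `G - X` of pathwidth at most `t`. -/
theorem pathwidth_packing_or_transversal (t : ℕ) :
    ∃ c : ℕ, ∀ (V : Type) [Fintype V] (G : SimpleGraph V) (k : ℕ),
      (∃ S : Fin k → Set V, (Pairwise fun a b => Disjoint (S a) (S b)) ∧
        ∀ a, t + 1 ≤ pathwidth (G.induce (S a))) ∨
      (∃ X : Set V, X.ncard ≤ c * k ∧ pathwidth (G.induce Xᶜ) ≤ t) :=
  ⟨3 ^ (t + 2), fun _ _ G k => pathwidth_packing_or_transversal_general G t k⟩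
end

section
/- Let ℱ be a set of q ≥ 1 graphs, each with at most r connected components, and let t ≥ 1. Then for every graph G of pathwidth strictly less than t, the minimum size of an ℱ-transversal of G is at most 2qrt times the maximum size of an ℱ-packing in G. -/
open SimpleGraph Set

/-!
In a path decomposition of `G`, each bag separates the earlier bags from the later ones, so the
bags meeting a connected vertex set form an interval, and connected sets with disjoint intervals
are disjoint. Let `H` be a member of the family with `c ≤ r` components and let `ν` be the packing
number. Take `ν + 1` copies of each component of `H`, and for each copy the family of intervals of
its models in `G`. If for some copy all these intervals are pierced by `c (ν + 1)` points, the
union of the corresponding bags meets every model of `H`. Otherwise a greedy choice by right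
endpoints gives pairwise disjoint models of all the copies, which assemble into `ν + 1` disjoint
models of `H`, a contradiction. Hence at most `c (ν + 1) t ≤ 2 r t ν` vertices meet all models of
`H` (none are needed if `ν = 0`), and the union of these sets over the `q` members is a
transversal.
-/

open Function

section MinorModel

variable {V V' W W' : Type*} {G : SimpleGraph V} {G' : SimpleGraph V'} {H : SimpleGraph W}
  {H' : SimpleGraph W'} {f : W → Set V} {S T : Set V}

/-- `f` is a model of `H` in `G`: the branch sets `f w` witness that `H` is a minor of `G`. Unlike
`HasMinor (G.induce S) H`, this notion keeps all branch sets inside the fixed vertex type `V`, so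
that models living in different subgraphs of `G` can be compared and combined. -/
structure IsMinorModel (G : SimpleGraph V) (H : SimpleGraph W) (f : W → Set V) : Prop where
  connected (w : W) : (G.induce (f w)).Connected
  disjoint : Pairwise (Disjoint on f)
  exists_adj : ∀ ⦃w w'⦄, H.Adj w w' → ∃ a ∈ f w, ∃ b ∈ f w', G.Adj a b

theorem hasMinor_iff_exists_isMinorModel : HasMinor G H ↔ ∃ f, IsMinorModel G H f :=
  exists_congr fun _ => ⟨fun ⟨h₁, h₂, h₃⟩ => ⟨h₁, h₂, h₃⟩, fun ⟨h₁, h₂, h₃⟩ => ⟨h₁, h₂, h₃⟩⟩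

theorem connected_induce_image_iff (φ : G ↪g G') :
    (G'.induce (φ '' S)).Connected ↔ (G.induce S).Connected :=
  let e : G.induce S ≃g G'.induce (φ '' S) :=
    { toEquiv := Equiv.Set.image φ S φ.injective
      map_rel_iff' := φ.map_adj_iff }
  e.connected_iff.symm

theorem isMinorModel_image_iff (φ : G ↪g G') :
    IsMinorModel G' H (fun w => φ '' f w) ↔ IsMinorModel G H f where
  mp h :=
    { connected w := (connected_induce_image_iff φ).1 (h.connected w)
      disjoint _ _ hne := (disjoint_image_iff φ.injective).1 (h.disjoint hne)
      exists_adj _ _ hadj := by simpa using h.exists_adj hadj }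
  mpr h :=
    { connected w := (connected_induce_image_iff φ).2 (h.connected w)
      disjoint _ _ hne := (disjoint_image_iff φ.injective).2 (h.disjoint hne)
      exists_adj _ _ hadj := by simpa using h.exists_adj hadj }

theorem hasMinor_induce_iff :
    HasMinor (G.induce S) H ↔ ∃ f, IsMinorModel G H f ∧ ⋃ w, f w ⊆ S := by
  rw [hasMinor_iff_exists_isMinorModel]
  constructor
  · rintro ⟨f, hf⟩
    exact ⟨_, (isMinorModel_image_iff (Embedding.induce S)).2 hf,
      iUnion_subset fun w => Subtype.coe_image_subset S (f w)⟩
  · rintro ⟨f, hf, hfS⟩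
    have himage (w : W) : Embedding.induce (G := G) S '' (Subtype.val ⁻¹' f w) = f w :=
      Subtype.image_preimage_coe S (f w) ▸ inter_eq_right.2 (iUnion_subset_iff.1 hfS w)
    exact ⟨fun w => Subtype.val ⁻¹' f w,
      (isMinorModel_image_iff (Embedding.induce S)).1 (by simpa only [himage] using hf)⟩

theorem HasMinor.induce_mono (h : HasMinor (G.induce S) H) (hST : S ⊆ T) :
    HasMinor (G.induce T) H := by
  obtain ⟨f, hf, hfS⟩ := hasMinor_induce_iff.1 h
  exact hasMinor_induce_iff.2 ⟨f, hf, hfS.trans hST⟩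

theorem hasMinor_of_isEmpty [IsEmpty W] : HasMinor G H :=
  ⟨isEmptyElim, isEmptyElim, fun w => isEmptyElim w, fun w => isEmptyElim w⟩

theorem HasMinor.nonempty [Nonempty W] (h : HasMinor G H) : Nonempty V :=
  let ⟨_, hf, _⟩ := h
  (hf (Classical.arbitrary W)).nonempty.map Subtype.val

theorem injective_of_pairwise_disjoint_of_nonempty {ι : Type*} {S : ι → Set V}
    (hS : Pairwise (Disjoint on S)) (hne : ∀ i, (S i).Nonempty) : Injective S :=
  injective_iff_pairwise_ne.2 fun i _ hij => (hS hij).ne (hne i).ne_empty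

theorem HasMinor.finite [Finite V] (h : HasMinor G H) : Finite W :=
  let ⟨_, hconn, hdisj, _⟩ := h
  .of_injective _ <| injective_of_pairwise_disjoint_of_nonempty hdisj fun w =>
    nonempty_coe_sort.1 (hconn w).nonempty

namespace IsMinorModel

theorem comp (hf : IsMinorModel G H f) (φ : H' →g H) (hφ : Injective φ) :
    IsMinorModel G H' (f ∘ φ) where
  connected w := hf.connected (φ w)
  disjoint _ _ hne := hf.disjoint (hφ.ne hne)
  exists_adj _ _ hadj := hf.exists_adj (φ.map_adj hadj)

theorem connected_iUnion (hf : IsMinorModel G H f) (hH : H.Connected) :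
    (G.induce (⋃ w, f w)).Connected := by
  have reachable_of_mem {w : W} {u v : V} (hu : u ∈ f w) (hv : v ∈ f w) :
      (G.induce (⋃ w, f w)).Reachable ⟨u, mem_iUnion_of_mem w hu⟩ ⟨v, mem_iUnion_of_mem w hv⟩ :=
    ((hf.connected w).preconnected ⟨u, hu⟩ ⟨v, hv⟩).map
      (G.induceHomOfLE (subset_iUnion f w)).toHom
  have reachable_of_walk {w w' : W} (p : H.Walk w w') {u v : V} (hu : u ∈ f w) (hv : v ∈ f w') :
      (G.induce (⋃ w, f w)).Reachable
        ⟨u, mem_iUnion_of_mem w hu⟩ ⟨v, mem_iUnion_of_mem w' hv⟩ := by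
    induction p generalizing u with
    | nil => exact reachable_of_mem hu hv
    | cons hadj _ ih =>
      obtain ⟨a, ha, b, hb, hab⟩ := hf.exists_adj hadj
      have hab' : (G.induce (⋃ w, f w)).Adj
          ⟨a, mem_iUnion_of_mem _ ha⟩ ⟨b, mem_iUnion_of_mem _ hb⟩ := hab
      exact (reachable_of_mem hu ha).trans (hab'.reachable.trans (ih hb hv))
  obtain ⟨w₀⟩ := hH.nonempty
  obtain ⟨v₀, hv₀⟩ := (hf.connected w₀).nonempty
  refine (connected_iff _).2 ⟨?_, ⟨v₀, mem_iUnion_of_mem w₀ hv₀⟩⟩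
  rintro ⟨u, hu⟩ ⟨v, hv⟩
  obtain ⟨w, huw⟩ := mem_iUnion.1 hu
  obtain ⟨w', hvw'⟩ := mem_iUnion.1 hv
  exact reachable_of_walk (hH.preconnected w w').some huw hvw'

theorem of_connectedComponents {g : ∀ c : H.ConnectedComponent, c → Set V}
    (hg : ∀ c, IsMinorModel G c.toSimpleGraph (g c))
    (hdisj : Pairwise (Disjoint on fun c => ⋃ w, g c w)) :
    IsMinorModel G H fun w => g (H.connectedComponentMk w) ⟨w, rfl⟩ := by
  have branch_eq {c : H.ConnectedComponent} {w : W} (hw : H.connectedComponentMk w = c) :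
      g (H.connectedComponentMk w) ⟨w, rfl⟩ = g c ⟨w, hw⟩ := by
    subst hw; rfl
  refine ⟨fun w => (hg _).connected _, fun w w' hne => ?_, fun w w' hadj => ?_⟩
  · by_cases hc : H.connectedComponentMk w' = H.connectedComponentMk w
    · rw [onFun, branch_eq hc]
      exact (hg _).disjoint fun h => hne (congrArg Subtype.val h)
    · exact (hdisj (Ne.symm hc)).mono (subset_iUnion _ _) (subset_iUnion _ _)
  · have hc : H.connectedComponentMk w' = H.connectedComponentMk w :=
      (ConnectedComponent.sound hadj.reachable).symm
    rw [branch_eq hc]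
    exact (hg _).exists_adj hadj

end IsMinorModel

end MinorModel

section Interval

variable {α κ : Type*} [LinearOrder α] [WellFoundedLT α]

theorem exists_mem_forall_snd_le (𝓘 : κ → Set (NonemptyInterval α)) (h : ∃ k, (𝓘 k).Nonempty) :
    ∃ k₀, ∃ J₀ ∈ 𝓘 k₀, ∀ k, ∀ J ∈ 𝓘 k, J₀.snd ≤ J.snd := by
  obtain ⟨k, J, hJ⟩ := h
  obtain ⟨⟨k₀, J₀⟩, hJ₀, hmin⟩ := exists_minimalFor_of_wellFoundedLT
    (fun x : κ × NonemptyInterval α => x.2 ∈ 𝓘 x.1) (fun x => x.2.snd) ⟨(k, J), hJ⟩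
  exact ⟨k₀, J₀, hJ₀, fun k J hJ => (le_total J₀.snd J.snd).elim id (hmin (j := (k, J)) hJ)⟩

theorem exists_pairwise_disjoint_nonemptyInterval [Finite κ] (𝓘 : κ → Set (NonemptyInterval α))
    (h𝓘 : ∀ k, ∀ P : Finset α, P.card < Nat.card κ → ∃ J ∈ 𝓘 k, ∀ a ∈ P, a ∉ J) :
    ∃ J : κ → NonemptyInterval α,
      (∀ k, J k ∈ 𝓘 k) ∧ Pairwise (Disjoint on fun k => (J k : Set α)) := by
  classical
  induction hn : Nat.card κ generalizing κ with
  | zero =>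
    have := Finite.card_eq_zero_iff.1 hn
    exact ⟨isEmptyElim, isEmptyElim, fun k => isEmptyElim k⟩
  | succ n ih =>
    obtain ⟨d, J₀, hJ₀, hmin⟩ := exists_mem_forall_snd_le 𝓘 <| by
      obtain ⟨k⟩ : Nonempty κ := Finite.card_pos_iff.1 (by lia)
      obtain ⟨J, hJ, -⟩ := h𝓘 k ∅ (by simp [hn])
      exact ⟨k, J, hJ⟩
    have card_ne : Nat.card {k // k ≠ d} = n := by
      rw [← Nat.card_congr (Equiv.optionSubtypeNe d), Finite.card_option] at hn
      lia
    -- By the choice of `J₀`, an interval avoiding its right endpoint lies entirely after `J₀`.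
    have exists_after (k : κ) (P : Finset α) (hP : P.card < n) :
        ∃ J ∈ {J ∈ 𝓘 k | J₀.snd < J.fst}, ∀ a ∈ P, a ∉ J := by
      obtain ⟨J, hJ, hJP⟩ := h𝓘 k (insert J₀.snd P)
        (by have := Finset.card_insert_le J₀.snd P; lia)
      rw [Finset.forall_mem_insert, NonemptyInterval.mem_def, not_and_or] at hJP
      exact ⟨J, ⟨hJ, not_le.1 (hJP.1.resolve_right (not_not.2 (hmin k J hJ)))⟩, hJP.2⟩
    obtain ⟨J, hJ, hdisj⟩ := ih (fun k : {k // k ≠ d} => {J ∈ 𝓘 k | J₀.snd < J.fst})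
      (fun k P hP => exists_after k P (card_ne ▸ hP)) card_ne
    have disjoint_J₀ (k) : Disjoint (J₀ : Set α) (J k) :=
      Set.disjoint_left.2 fun a ha ha' => (ha.2.trans_lt (hJ k).2).not_ge ha'.1
    refine ⟨fun k => if hk : k = d then J₀ else J ⟨k, hk⟩, fun k => ?_, fun k k' hne => ?_⟩
    · by_cases hk : k = d
      · simpa [hk] using hJ₀
      · simpa [hk] using (hJ ⟨k, hk⟩).1
    · by_cases hk : k = d <;> by_cases hk' : k' = d
      · exact absurd (hk.trans hk'.symm) hne
      · simpa [onFun, hk, hk'] using disjoint_J₀ ⟨k', hk'⟩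
      · simpa [onFun, hk, hk'] using (disjoint_J₀ ⟨k, hk⟩).symm
      · simpa [onFun, hk, hk'] using
          @hdisj ⟨k, hk⟩ ⟨k', hk'⟩ fun h => hne (congrArg Subtype.val h)

end Interval

namespace IsPathDecompOn

variable {V W : Type*} {G : SimpleGraph V} {A : Set V} {p t : ℕ} {B : Fin p → Set V}

theorem ordConnected_setOf_inter_nonempty (hB : IsPathDecompOn G A p B) {S : Set V} (hSA : S ⊆ A)
    (hS : (G.induce S).Preconnected) : {i | (B i ∩ S).Nonempty}.OrdConnected := by
  obtain ⟨-, -, hedge, hinterval⟩ := hB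
  refine ⟨?_⟩
  rintro i ⟨u, hui, huS⟩ j ⟨v, hvj, hvS⟩ b ⟨hib, hbj⟩
  let L : Set S := {x | ∃ l ≤ b, x.1 ∈ B l}
  by_cases hvL : ⟨v, hvS⟩ ∈ L
  · obtain ⟨l, hlb, hvl⟩ := hvL
    exact ⟨v, hinterval v l b j hlb hbj hvl hvj, hvS⟩
  · obtain ⟨⟨⟨x, y⟩, hxy⟩, -, ⟨l, hlb, hxl⟩, hyL⟩ :=
      (hS ⟨u, huS⟩ ⟨v, hvS⟩).some.exists_boundary_dart L ⟨i, hib, hui⟩ hvL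
    obtain ⟨m, hxm, hym⟩ := hedge hxy (hSA x.2) (hSA y.2)
    have hbm : b ≤ m := le_of_not_ge fun hmb => hyL ⟨m, hmb, hym⟩
    exact ⟨x, hinterval x l b m hlb hbm hxl hxm, x.2⟩

theorem exists_nonemptyInterval_mem_iff (hB : IsPathDecompOn G A p B) {S : Set V} (hSA : S ⊆ A)
    (hS : (G.induce S).Connected) :
    ∃ J : NonemptyInterval (Fin p), ∀ i, i ∈ J ↔ (B i ∩ S).Nonempty := by
  have hord := hB.ordConnected_setOf_inter_nonempty hSA hS.preconnected
  have hne : {i | (B i ∩ S).Nonempty}.Nonempty := by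
    obtain ⟨v, hv⟩ := hS.nonempty
    obtain ⟨i, hi⟩ := hB.2.1 v (hSA hv)
    exact ⟨i, v, hi, hv⟩
  obtain ⟨l, hl, hmin⟩ := exists_min_image _ id (toFinite _) hne
  obtain ⟨m, hm, hmax⟩ := exists_max_image _ id (toFinite _) hne
  exact ⟨⟨(l, m), hmin m hm⟩, fun i =>
    ⟨fun hi => hord.out hl hm hi, fun hi => ⟨hmin i hi, hmax i hi⟩⟩⟩

theorem exists_pairwise_disjoint_of_forall_ncard_le {κ : Type*} [Finite κ]
    (hB : IsPathDecompOn G A p B) (hBt : ∀ i, (B i).ncard ≤ t) (𝒮 : κ → Set (Set V))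
    (h𝒮A : ∀ k, ∀ S ∈ 𝒮 k, S ⊆ A) (h𝒮 : ∀ k, ∀ S ∈ 𝒮 k, (G.induce S).Connected)
    (hX : ∀ k, ∀ X : Set V, X.ncard ≤ Nat.card κ * t → ∃ S ∈ 𝒮 k, Disjoint X S) :
    ∃ S : κ → Set V, (∀ k, S k ∈ 𝒮 k) ∧ Pairwise (Disjoint on S) := by
  let 𝓘 (k : κ) : Set (NonemptyInterval (Fin p)) :=
    {J | ∃ S ∈ 𝒮 k, ∀ i, i ∈ J ↔ (B i ∩ S).Nonempty}
  have exists_unpierced (k : κ) (P : Finset (Fin p)) (hP : P.card < Nat.card κ) :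
      ∃ J ∈ 𝓘 k, ∀ i ∈ P, i ∉ J := by
    have ncard_bags_le : (⋃ i ∈ P, B i).ncard ≤ Nat.card κ * t := calc
      (⋃ i ∈ P, B i).ncard ≤ ∑ i ∈ P, (B i).ncard := P.set_ncard_biUnion_le B
      _ ≤ P.card * t := Finset.sum_le_card_nsmul P _ t fun i _ => hBt i
      _ ≤ Nat.card κ * t := by gcongr
    obtain ⟨S, hS, hdisj⟩ := hX k _ ncard_bags_le
    obtain ⟨J, hJ⟩ := hB.exists_nonemptyInterval_mem_iff (h𝒮A k S hS) (h𝒮 k S hS)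
    refine ⟨J, ⟨S, hS, hJ⟩, fun i hi hiJ => ?_⟩
    exact not_disjoint_iff_nonempty_inter.2 ((hJ i).1 hiJ)
      (hdisj.mono_left (subset_biUnion_of_mem (u := B) hi))
  obtain ⟨J, hJ, hdisj⟩ := exists_pairwise_disjoint_nonemptyInterval 𝓘 exists_unpierced
  choose S hS hJS using hJ
  refine ⟨S, hS, fun k k' hne => Set.disjoint_left.2 fun v hv hv' => ?_⟩
  obtain ⟨i, hi⟩ := hB.2.1 v (h𝒮A k _ (hS k) hv)
  exact Set.disjoint_left.1 (hdisj hne) ((hJS k i).2 ⟨v, hi, hv⟩) ((hJS k' i).2 ⟨v, hi, hv'⟩)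

theorem exists_isHPacking_of_forall_hasMinor (hB : IsPathDecompOn G univ p B)
    (hBt : ∀ i, (B i).ncard ≤ t) (H : SimpleGraph W) [Finite H.ConnectedComponent] (n : ℕ)
    (hX : ∀ X : Set V, X.ncard ≤ Nat.card H.ConnectedComponent * n * t →
      HasMinor (G.induce Xᶜ) H) :
    ∃ S : Fin n → Set V, IsHPacking G H n S := by
  let 𝒮 (k : H.ConnectedComponent × Fin n) : Set (Set V) :=
    {S | ∃ g, IsMinorModel G k.1.toSimpleGraph g ∧ ⋃ w, g w = S}
  have connected_of_mem (k) : ∀ S ∈ 𝒮 k, (G.induce S).Connected := by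
    rintro _ ⟨g, hg, rfl⟩
    exact hg.connected_iUnion k.1.connected_toSimpleGraph
  have exists_mem_disjoint (k) (X : Set V)
      (hXn : X.ncard ≤ Nat.card (H.ConnectedComponent × Fin n) * t) : ∃ S ∈ 𝒮 k, Disjoint X S := by
    rw [Nat.card_prod, Nat.card_fin] at hXn
    obtain ⟨f, hf, hfX⟩ := hasMinor_induce_iff.1 (hX X hXn)
    refine ⟨_, ⟨_, hf.comp k.1.toSimpleGraph_hom Subtype.val_injective, rfl⟩, ?_⟩
    exact disjoint_compl_right.mono_right
      (iUnion_subset fun w => (subset_iUnion f w.1).trans hfX)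
  obtain ⟨S, hS, hdisj⟩ := hB.exists_pairwise_disjoint_of_forall_ncard_le hBt 𝒮
    (fun _ _ _ => subset_univ _) connected_of_mem exists_mem_disjoint
  choose g hg hgS using hS
  obtain rfl : (fun k => ⋃ w, g k w) = S := funext hgS
  refine ⟨fun a => ⋃ c, ⋃ w, g (c, a) w, fun a a' hne => ?_, fun a => ?_⟩
  · exact disjoint_iUnion_left.2 fun c => disjoint_iUnion_right.2 fun c' =>
      hdisj (mt (congrArg Prod.snd) hne)
  · have hmodel := IsMinorModel.of_connectedComponents (fun c => hg (c, a))
      (hdisj.comp_of_injective (Prod.mk_left_injective a))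
    refine hasMinor_induce_iff.2 ⟨_, hmodel, iUnion_subset fun w => ?_⟩
    exact subset_iUnion_of_subset (H.connectedComponentMk w)
      (subset_iUnion (g (H.connectedComponentMk w, a)) ⟨w, rfl⟩)

end IsPathDecompOn

theorem exists_isPathDecompOn_of_pathwidth_lt {V : Type*} {G : SimpleGraph V} {t : ℕ}
    (h : pathwidth G < t) :
    ∃ p, ∃ B : Fin p → Set V, IsPathDecompOn G univ p B ∧ ∀ i, (B i).ncard ≤ t := by
  have hne : {t | ∃ p, ∃ B : Fin p → Set V,
      IsPathDecompOn G univ p B ∧ ∀ i, (B i).ncard ≤ t + 1}.Nonempty :=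
    ⟨(univ : Set V).ncard, 1, fun _ => univ,
      ⟨fun _ => subset_rfl, fun _ _ => ⟨0, trivial⟩, fun _ _ _ _ _ => ⟨0, trivial, trivial⟩,
        fun _ _ _ _ _ _ _ _ => trivial⟩,
      fun _ => Nat.le_succ _⟩
  obtain ⟨p, B, hB, hBt⟩ := Nat.sInf_mem hne
  exact ⟨p, B, hB, fun i => (hBt i).trans h⟩

section Family

variable {V ι : Type*} {W : ι → Type*} {G : SimpleGraph V} {F : ∀ i, SimpleGraph (W i)}

theorem tauF_le_ncard {X : Set V} (hX : ∀ i, ¬ HasMinor (G.induce Xᶜ) (F i)) :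
    tauF G F ≤ X.ncard :=
  Nat.sInf_le ⟨X, rfl, hX⟩

/-- Every graph contains the empty graph as a minor, so there is no transversal and `tauF` takes
its junk value. -/
theorem tauF_eq_zero_of_isEmpty (i : ι) [IsEmpty (W i)] : tauF G F = 0 := by
  have hempty : {n | ∃ X : Set V, X.ncard = n ∧ ∀ i, ¬ HasMinor (G.induce Xᶜ) (F i)} = ∅ :=
    eq_empty_of_forall_notMem fun _ ⟨_, _, hX⟩ => hX i hasMinor_of_isEmpty
  rw [tauF, hempty, Nat.sInf_empty]

variable [Finite V] [∀ i, Nonempty (W i)]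

theorem bddAbove_setOf_isFPacking : BddAbove {k | ∃ S : Fin k → Set V, IsFPacking G F k S} := by
  refine ⟨Nat.card (Set V), ?_⟩
  rintro k ⟨S, hdisj, hminor⟩
  have hinj : Injective S := injective_of_pairwise_disjoint_of_nonempty hdisj fun a =>
    let ⟨_, ha⟩ := hminor a
    nonempty_coe_sort.1 ha.nonempty
  simpa using Nat.card_le_card_of_injective S hinj

theorem IsFPacking.le_nuF {k : ℕ} {S : Fin k → Set V} (hS : IsFPacking G F k S) : k ≤ nuF G F :=
  le_csSup bddAbove_setOf_isFPacking ⟨S, hS⟩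

theorem exists_ncard_le_not_hasMinor_of_pathwidth_lt {t : ℕ} (hG : pathwidth G < t) (i : ι) :
    ∃ X : Set V, X.ncard ≤ Nat.card (F i).ConnectedComponent * (2 * nuF G F) * t ∧
      ¬ HasMinor (G.induce Xᶜ) (F i) := by
  by_contra! hX
  have hminor : HasMinor (G.induce ∅ᶜ) (F i) := hX ∅ (by simp)
  have : Finite (W i) := hminor.finite
  have hν : 1 ≤ nuF G F :=
    IsFPacking.le_nuF (S := fun _ => ∅ᶜ) ⟨Subsingleton.pairwise, fun _ => ⟨i, hminor⟩⟩
  obtain ⟨p, B, hB, hBt⟩ := exists_isPathDecompOn_of_pathwidth_lt hG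
  obtain ⟨S, hdisj, hS⟩ := hB.exists_isHPacking_of_forall_hasMinor hBt (F i) (nuF G F + 1)
    fun X hXn => hX X (hXn.trans (by gcongr; lia))
  have : nuF G F + 1 ≤ nuF G F := IsFPacking.le_nuF ⟨hdisj, fun a => ⟨i, hS a⟩⟩
  lia

end Family

theorem transversal_of_bounded_pathwidth_general {V ι : Type*} [Finite V] [Fintype ι]
    {W : ι → Type*} (F : ∀ i, SimpleGraph (W i)) {r t : ℕ}
    (hr : ∀ i, Nat.card (F i).ConnectedComponent ≤ r) (G : SimpleGraph V) (hG : pathwidth G < t) :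
    tauF G F ≤ 2 * Fintype.card ι * r * t * nuF G F := by
  by_cases hW : ∀ i, Nonempty (W i)
  · choose X hXn hX using fun i => exists_ncard_le_not_hasMinor_of_pathwidth_lt (F := F) hG i
    calc tauF G F
        ≤ (⋃ i, X i).ncard := tauF_le_ncard fun i h =>
          hX i (h.induce_mono (compl_subset_compl.2 (subset_iUnion X i)))
      _ ≤ ∑ i, (X i).ncard := ncard_iUnion_le_of_fintype X
      _ ≤ Fintype.card ι * (r * (2 * nuF G F) * t) :=
          Finset.sum_le_card_nsmul _ _ _ fun i _ => (hXn i).trans (by gcongr; exact hr i)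
      _ = 2 * Fintype.card ι * r * t * nuF G F := by ring
  · obtain ⟨i, hi⟩ := not_forall.1 hW
    have := not_nonempty_iff.1 hi
    exact (tauF_eq_zero_of_isEmpty i).trans_le (Nat.zero_le _)

/-- If `F` is a set of `q ≥ 1` graphs each with at most `r` components, `t ≥ 1`, and `G`
has pathwidth strictly less than `t`, then `τ_F(G) ≤ 2qrt · ν_F(G)`. -/
theorem transversal_of_bounded_pathwidth {ι : Type} [Fintype ι] {W : ι → Type}
    [∀ i, Fintype (W i)] (F : ∀ i, SimpleGraph (W i)) (q r t : ℕ)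
    (hq : Fintype.card ι = q) (hq1 : 1 ≤ q)
    (hr : ∀ i, Nat.card (F i).ConnectedComponent ≤ r) (ht : 1 ≤ t)
    (V : Type) [Fintype V] (G : SimpleGraph V) (hpw : pathwidth G < t) :
    tauF G F ≤ 2 * q * r * t * nuF G F := by
  subst hq
  exact transversal_of_bounded_pathwidth_general F hr G hpw
end
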